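/- Let f, g : (ℝⁿ,0) → (ℝᵐ,0) be Nash map germs. If there exists a C^∞ map τ defined near 0 in ℝⁿ with τ(0)=0 and invertible derivative at 0 such that f∘τ = g on a neighborhood of 0 (i.e., f and g are C^∞ R equivalent), then there exists a Nash diffeomorphism germ τ̃ of (ℝⁿ,0) such that f∘τ̃ = g on a neighborhood of 0 (i.e., f and g are Nash R equivalent). -/

import Mathlib

open scoped Topology

/-- A Nash map germ `f : (ℝⁿ,0) → (ℝᵐ,0)`: real analytic at `0`, `f 0 = 0`, and each
component satisfies a nontrivial polynomial equation near `0`. -/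
def NashGerm {n m : ℕ} (f : (Fin n → ℝ) → (Fin m → ℝ)) : Prop :=
  AnalyticAt ℝ f 0 ∧ f 0 = 0 ∧
    ∀ j : Fin m, ∃ P : MvPolynomial (Fin (n + 1)) ℝ, P ≠ 0 ∧
      ∀ᶠ x : Fin n → ℝ in 𝓝 0, MvPolynomial.eval (Fin.snoc x (f x j)) P = 0

/-- A Nash diffeomorphism germ of `(ℝⁿ,0)`: a Nash map germ whose derivative at `0` is a
linear isomorphism. -/
def NashDiffeoGerm {n : ℕ} (τ : (Fin n → ℝ) → (Fin n → ℝ)) : Prop :=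
  NashGerm τ ∧ ∃ D : (Fin n → ℝ) ≃L[ℝ] (Fin n → ℝ),
    HasFDerivAt τ (D : (Fin n → ℝ) →L[ℝ] (Fin n → ℝ)) 0

/-!
Write `τ` for the smooth change of coordinates with `f ∘ τ = g`. Choose polynomials `q j` and `r j`
having the components of `f` and of `g` as simple roots over the field of fractions. The Taylor
series of `(τ, g)` at `0` then solves the polynomial system `q j (τ, g j) = 0`, `r j (x, g j) = 0`.

Artin approximation yields a Nash solution `(φ, h)` agreeing with `(τ, g)` to any prescribed order.
It is proved by induction on the number of variables: modulo a Weierstrass polynomial, a solution is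
described by a solution of another polynomial system in one variable fewer, and an approximate
solution whose error is divisible by a high power of a Jacobian factor is corrected to an exact one
by Newton's lemma over the Henselian ring of Nash power series.

A simple root is determined by its expansion to a sufficiently high order, so `h = g`, and then
`f ∘ φ = g` because `f ∘ φ` and `g` are roots of the same `q j (φ, ·)`. Agreement with `τ` to order
at least two preserves the derivative at `0`, so `φ` is a diffeomorphism.
-/

section NewtonLemma

open Polynomial

section Henselian

variable {H : Type*} [CommRing H] {I : Ideal H} [HenselianRing H I]

lemma isUnit_one_add_of_mem {x : H} (hx : x ∈ I) : IsUnit (1 + x) := by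
  simpa [add_comm] using Ideal.mem_jacobson_bot.mp (HenselianRing.jac hx) 1

/-- The root of `a Y² R(Y) - Y + 1` that is congruent to `1` is found through the reciprocal
polynomial, which is monic and has the simple root `1` modulo `I`. -/
lemma exists_mul_sq_mul_eval_sub_add_one_eq_zero {a : H} (ha : a ∈ I) (R : H[X]) :
    ∃ y : H, a * y ^ 2 * R.eval y - y + 1 = 0 := by
  set M := R.natDegree
  let g : H[X] := X ^ (M + 2) + (C a * R.reverse - X ^ (M + 1))
  have hg : g.Monic := by
    have hR : (C a * R.reverse).degree ≤ (M + 1 : ℕ) := degree_le_of_natDegree_le <|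
      (natDegree_C_mul_le a _).trans ((reverse_natDegree_le R).trans M.le_succ)
    refine monic_X_pow_add (((degree_sub_le _ _).trans (max_le hR (degree_X_pow_le _))).trans_lt ?_)
    exact_mod_cast M.succ.lt_succ_self
  have hg_eval : g.eval 1 ∈ I := by
    simpa [g] using I.mul_mem_right _ ha
  have hg_derivative : g.derivative.eval 1 = 1 + a * R.reverse.derivative.eval 1 := by
    simp only [g, derivative_add, derivative_sub, derivative_C_mul, derivative_X_pow, eval_add,
      eval_sub, eval_mul, eval_pow, eval_X, eval_C, one_pow, mul_one, Nat.cast_add, Nat.cast_one,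
      Nat.cast_ofNat]
    ring
  have hg_unit : IsUnit (Ideal.Quotient.mk I (g.derivative.eval 1)) := by
    rw [hg_derivative]
    exact (isUnit_one_add_of_mem (I.mul_mem_right _ ha)).map _
  obtain ⟨z, hz, hz1⟩ := HenselianRing.is_henselian g hg 1 hg_eval hg_unit
  have hz_unit : IsUnit z := by simpa using isUnit_one_add_of_mem hz1
  obtain ⟨y, hzy⟩ := hz_unit.exists_right_inv
  let _ : Invertible y := ⟨z, hzy, by rw [mul_comm, hzy]⟩
  have hreverse : R.reverse.eval z * y ^ M = R.eval y :=
    eval₂_reverse_mul_pow (RingHom.id H) y R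
  refine ⟨y, ?_⟩
  have hroot : z ^ (M + 2) + (a * R.reverse.eval z - z ^ (M + 1)) = 0 := by
    simpa [g] using hz
  have hpow : ∀ k, z ^ k * y ^ k = 1 := fun k ↦ by rw [← mul_pow, hzy, one_pow]
  linear_combination y ^ (M + 2) * hroot - a * y ^ 2 * hreverse - hpow (M + 2) + y * hpow (M + 1)

lemma exists_isRoot_of_coeff_one_eq_one {p : H[X]} (h0 : p.coeff 0 ∈ I) (h1 : p.coeff 1 = 1) :
    ∃ u ∈ I, p.IsRoot u := by
  set a := p.coeff 0
  set Q := p.divX.divX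
  have hp : p = (Q * X + 1) * X + C a := by
    rw [← C_1, ← h1, ← zero_add 1, ← coeff_divX, divX_mul_X_add, divX_mul_X_add]
  obtain ⟨y, hy⟩ := exists_mul_sq_mul_eval_sub_add_one_eq_zero h0 (Q.comp (C (-a) * X))
  refine ⟨-a * y, I.mul_mem_right _ (I.neg_mem h0), ?_⟩
  rw [IsRoot.def, hp]
  simp only [eval_comp, eval_mul, eval_add, eval_C, eval_X, eval_one] at hy ⊢
  linear_combination a * hy

lemma exists_isRoot_add_mul {f : H[X]} {b v : H} (hv : v ∈ I)
    (hf : f.eval b = f.derivative.eval b ^ 2 * v) : ∃ w, f.IsRoot (b + v * w) := by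
  set D := f.derivative.eval b
  set Q := (taylor b f).divX.divX
  have hT : taylor b f = (Q * X + C D) * X + C (f.eval b) := by
    rw [show D = _ from (taylor_coeff_one b f).symm, ← taylor_coeff_zero, ← zero_add 1,
      ← coeff_divX, divX_mul_X_add, divX_mul_X_add]
  obtain ⟨u, hu, hroot⟩ := exists_isRoot_of_coeff_one_eq_one (I := I)
    (p := C v + X + X ^ 2 * Q.comp (C D * X)) (by simpa [coeff_zero_eq_eval_zero] using hv)
    (by simp [coeff_X_pow_mul'])
  replace hroot : v + u + u ^ 2 * Q.eval (D * u) = 0 := by simpa using hroot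
  have hunit : IsUnit (1 + u * Q.eval (D * u)) := isUnit_one_add_of_mem (I.mul_mem_right _ hu)
  obtain ⟨w, hw⟩ := hunit.exists_right_inv
  have huv : u = v * -w := by linear_combination w * hroot - u * hw
  have heval : f.eval (D * u + b) = (Q.eval (D * u) * (D * u) + D) * (D * u) + f.eval b := by
    simpa [taylor_eval] using congrArg (eval (D * u)) hT
  refine ⟨D * -w, ?_⟩
  rw [IsRoot.def, show b + v * (D * -w) = D * u + b by rw [huv]; ring, heval, hf]
  linear_combination D ^ 2 * hroot

lemma exists_isRoot_sub_mem {J : Ideal H} (hJ : J ≤ I) {p : H[X]} {t d e s i j : H}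
    (hd : d = e * s) (hi : i ∈ J) (hj : j ∈ J) (hp : p.eval t = d ^ 3 * i)
    (hp' : p.derivative.eval t = e + d ^ 3 * j) : ∃ u, p.IsRoot u ∧ u - t ∈ J := by
  have hunit : IsUnit (1 + s * d ^ 2 * j) := isUnit_one_add_of_mem (hJ (J.mul_mem_left _ hj))
  obtain ⟨w, hw⟩ := hunit.exists_right_inv
  have hdw : d = p.derivative.eval t * (s * w) := by
    rw [hp']
    linear_combination hd - e * s * hw - s * w * d ^ 2 * j * hd
  have hv : d * (s * w) ^ 2 * i ∈ J := J.mul_mem_left _ hi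
  have hquad : p.eval t = p.derivative.eval t ^ 2 * (d * (s * w) ^ 2 * i) := by
    rw [hp]
    linear_combination (d * i) * (d + p.derivative.eval t * (s * w)) * hdw
  obtain ⟨w', hw'⟩ := exists_isRoot_add_mul (hJ hv) hquad
  exact ⟨_, hw', by simpa using J.mul_mem_right w' hv⟩

end Henselian

section MinimalRelation

variable {R A H : Type*} [CommRing R] [CommRing A] [CommRing H]

/-- Among the polynomials over `R` that vanish at `t` and keep their degree under `φ : R → A`, the
relation `g` has the smallest degree; it plays the role of a minimal polynomial of `t` over the
fraction field of `φ(R)`. -/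
structure IsMinimalRelation (φ : R →+* A) (t : A) (g : R[X]) : Prop where
  eval₂_eq_zero : g.eval₂ φ t = 0
  map_leadingCoeff_ne_zero : φ g.leadingCoeff ≠ 0
  natDegree_le : ∀ s : R[X], s.eval₂ φ t = 0 → φ s.leadingCoeff ≠ 0 → g.natDegree ≤ s.natDegree

lemma exists_isMinimalRelation {φ : R →+* A} {t : A} {s : R[X]} (hs : s.eval₂ φ t = 0)
    (hlead : φ s.leadingCoeff ≠ 0) : ∃ g, IsMinimalRelation φ t g := by
  let S : Set R[X] := {s | s.eval₂ φ t = 0 ∧ φ s.leadingCoeff ≠ 0}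
  have hS : S.Nonempty := ⟨s, hs, hlead⟩
  obtain ⟨hroot, hne⟩ := Function.argminOn_mem natDegree S hS
  exact ⟨_, hroot, hne, fun s hs hlead ↦ Function.argminOn_le natDegree S ⟨hs, hlead⟩⟩

lemma map_coeff_eq_zero_of_eval₂_eq_zero {φ : R →+* A} {t : A} {r : R[X]} (hr : r.eval₂ φ t = 0)
    (h : ∀ s : R[X], s.natDegree ≤ r.natDegree → s.eval₂ φ t = 0 → φ s.leadingCoeff = 0) (k : ℕ) :
    φ (r.coeff k) = 0 := by
  induction hcard : r.support.card using Nat.strong_induction_on generalizing r with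
  | _ n ih =>
    obtain rfl | hr0 := eq_or_ne r 0
    · simp
    have hlead : φ r.leadingCoeff = 0 := h r le_rfl hr
    have herase : r.eraseLead.eval₂ φ t = 0 := by
      have := congrArg (eval₂ φ t) r.eraseLead_add_C_mul_X_pow
      rwa [eval₂_add, eval₂_mul, eval₂_C, hlead, zero_mul, add_zero, hr] at this
    obtain rfl | hk := eq_or_ne k r.natDegree
    · exact hlead
    · rw [← eraseLead_coeff_of_ne k hk]
      exact ih _ (hcard ▸ eraseLead_support_card_lt hr0) herase
        (fun s hs ↦ h s (hs.trans eraseLead_natDegree_le_aux)) rfl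

lemma eval₂_eq_zero_of_forall_map_coeff {ψ : R →+* H} {r : R[X]} (h : ∀ k, ψ (r.coeff k) = 0)
    (u : H) : r.eval₂ ψ u = 0 := by
  rw [eval₂_eq_sum_range]
  exact Finset.sum_eq_zero fun k _ ↦ by rw [h, zero_mul]

namespace IsMinimalRelation

variable {φ : R →+* A} {t : A} {g : R[X]}

lemma natDegree_pos (hg : IsMinimalRelation φ t g) : 0 < g.natDegree := by
  refine Nat.pos_of_ne_zero fun h ↦ hg.map_leadingCoeff_ne_zero ?_
  rw [leadingCoeff, h, ← eval₂_C φ t, ← eq_C_of_natDegree_eq_zero h, hg.eval₂_eq_zero]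

lemma map_coeff_eq_zero (hg : IsMinimalRelation φ t g) {r : R[X]} (hr : r.eval₂ φ t = 0)
    (hdeg : r.natDegree < g.natDegree) (k : ℕ) : φ (r.coeff k) = 0 :=
  map_coeff_eq_zero_of_eval₂_eq_zero hr (fun s hs hs0 ↦ by_contra fun hlead ↦
    (hg.natDegree_le s hs0 hlead).not_gt (hs.trans_lt hdeg)) k

lemma eval₂_derivative_ne_zero [IsDomain A] [CharZero A] (hg : IsMinimalRelation φ t g) :
    g.derivative.eval₂ φ t ≠ 0 := by
  intro h
  have hcoeff := hg.map_coeff_eq_zero h (natDegree_derivative_lt hg.natDegree_pos.ne')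
    (g.natDegree - 1)
  rw [coeff_derivative, Nat.sub_add_cancel hg.natDegree_pos, map_mul, mul_eq_zero] at hcoeff
  refine hcoeff.elim hg.map_leadingCoeff_ne_zero fun h ↦ ?_
  rw [map_add, map_natCast, map_one] at h
  exact Nat.cast_add_one_ne_zero _ h

lemma eval₂_eq_zero_of_ker_le [IsDomain H] (hg : IsMinimalRelation φ t g) {ψ : R →+* H}
    (hker : RingHom.ker φ ≤ RingHom.ker ψ) {u : H} (hu : g.eval₂ ψ u = 0)
    (hlead : ψ g.leadingCoeff ≠ 0) {F : R[X]} (hF : F.eval₂ φ t = 0) : F.eval₂ ψ u = 0 := by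
  induction hn : F.natDegree using Nat.strong_induction_on generalizing F with
  | _ n ih =>
    obtain hlt | hle := lt_or_ge F.natDegree g.natDegree
    · exact eval₂_eq_zero_of_forall_map_coeff (fun k ↦ hker (hg.map_coeff_eq_zero hF hlt k)) u
    · have hdeg : (g.cancelLeads F).natDegree < F.natDegree :=
        natDegree_cancelLeads_lt_of_natDegree_le_natDegree hle (hg.natDegree_pos.trans_le hle)
      have hcancel : (g.cancelLeads F).eval₂ ψ u = 0 :=
        ih _ (hn ▸ hdeg) (by simp [cancelLeads, hF, hg.eval₂_eq_zero, eval₂_mul]) rfl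
      simpa [cancelLeads, hu, eval₂_mul, Nat.sub_eq_zero_of_le hle, hlead] using hcancel

end IsMinimalRelation

end MinimalRelation

section AevalCons

variable {C B : Type*} [CommRing C] [CommRing B] [Algebra C B] {N : ℕ}

open MvPolynomial (aeval)

lemma aeval_cons (t : B) (y : Fin N → B) (F : MvPolynomial (Fin (N + 1)) C) :
    aeval (Fin.cons t y : Fin (N + 1) → B) F =
      (MvPolynomial.finSuccEquiv C N F).eval₂ (aeval y : MvPolynomial (Fin N) C →ₐ[C] B) t := by
  induction F using MvPolynomial.induction_on with
  | C a => simp [MvPolynomial.finSuccEquiv_apply]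
  | add p q hp hq => simp [hp, hq]
  | mul_X p i hp =>
    rw [map_mul, map_mul, eval₂_mul, hp]
    cases i using Fin.cases <;> simp [MvPolynomial.finSuccEquiv_X_zero,
      MvPolynomial.finSuccEquiv_X_succ]

lemma aeval_cons_finSuccEquiv_symm (t : B) (y : Fin N → B) (g : (MvPolynomial (Fin N) C)[X]) :
    aeval (Fin.cons t y : Fin (N + 1) → B) ((MvPolynomial.finSuccEquiv C N).symm g) =
      g.eval₂ (aeval y : MvPolynomial (Fin N) C →ₐ[C] B) t := by
  rw [aeval_cons, AlgEquiv.apply_symm_apply]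

lemma aeval_cons_rename_succ (t : B) (y : Fin N → B) (F : MvPolynomial (Fin N) C) :
    aeval (Fin.cons t y : Fin (N + 1) → B) (MvPolynomial.rename Fin.succ F) = aeval y F := by
  rw [MvPolynomial.aeval_rename]
  rfl

lemma aeval_sub_aeval_mem {σ : Type*} {I : Ideal B} {y z : σ → B} (h : ∀ i, z i - y i ∈ I)
    (F : MvPolynomial σ C) : aeval z F - aeval y F ∈ I := by
  have hmk : ∀ i, Ideal.Quotient.mkₐ C I (z i) = Ideal.Quotient.mkₐ C I (y i) :=
    fun i ↦ Ideal.Quotient.eq.mpr (h i)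
  refine Ideal.Quotient.eq.mp (?_ : Ideal.Quotient.mkₐ C I _ = Ideal.Quotient.mkₐ C I _)
  simp only [MvPolynomial.comp_aeval_apply, hmk]

lemma exists_eval₂_aeval_eq_add_mul {J : Ideal B} {d : B} {y z : Fin N → B}
    (h : ∀ i, z i - y i ∈ Ideal.span {d} * J) (t : B) (p : (MvPolynomial (Fin N) C)[X]) :
    ∃ j ∈ J, p.eval₂ (aeval z : MvPolynomial (Fin N) C →ₐ[C] B) t =
      p.eval₂ (aeval y : MvPolynomial (Fin N) C →ₐ[C] B) t + d * j := by
  obtain ⟨j, hj, hsub⟩ := Ideal.mem_span_singleton_mul.mp <|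
    aeval_sub_aeval_mem (y := (Fin.cons t y : Fin (N + 1) → B)) (z := Fin.cons t z)
      (Fin.cases (by simp) (by simpa using h)) ((MvPolynomial.finSuccEquiv C N).symm p)
  simp only [aeval_cons_finSuccEquiv_symm] at hsub
  exact ⟨j, hj, by rw [hsub]; ring⟩

end AevalCons

section NewtonSystem

open MvPolynomial (aeval rename)

variable {C A H : Type*} [CommRing C] [CommRing A] [Algebra C A] [CommRing H] [Algebra C H]

/-- The data of Tougeron's implicit function theorem for a point `y` of `A`: polynomials `f i` that
vanish at `y` and `δ` that does not, such that an approximate zero `y'` of `f` in `H`, with error in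
`δ(y') ^ K J`, can be corrected modulo `J` to a point `z` satisfying all the polynomial relations
over `C` satisfied by `y`. -/
structure IsNewtonSystem (I : Ideal H) {N : ℕ} (y : Fin N → A) (δ : MvPolynomial (Fin N) C)
    (f : Fin N → MvPolynomial (Fin N) C) (K : ℕ) : Prop where
  aeval_ne_zero : aeval y δ ≠ 0
  aeval_eq_zero : ∀ i, aeval y (f i) = 0
  exists_ker_le : ∀ (y' : Fin N → H) (J : Ideal H), J ≤ I → aeval y' δ ≠ 0 →
    (∀ i, aeval y' (f i) ∈ Ideal.span {aeval y' δ ^ K} * J) →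
      ∃ z : Fin N → H, (∀ i, z i - y' i ∈ J) ∧
        RingHom.ker (aeval y : MvPolynomial (Fin N) C →ₐ[C] A) ≤
          RingHom.ker (aeval z : MvPolynomial (Fin N) C →ₐ[C] H)

lemma isNewtonSystem_fin_zero [Nontrivial A] (hinj : Function.Injective (algebraMap C A))
    (I : Ideal H) (y : Fin 0 → A) :
    IsNewtonSystem I y (1 : MvPolynomial (Fin 0) C) Fin.elim0 0 where
  aeval_ne_zero := by simp
  aeval_eq_zero := finZeroElim
  exists_ker_le y' J _ _ _ := by
    refine ⟨y', finZeroElim, fun F hF ↦ ?_⟩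
    rw [RingHom.mem_ker, MvPolynomial.eq_C_of_isEmpty F, MvPolynomial.aeval_C] at hF ⊢
    rw [hinj (hF.trans (map_zero _).symm), map_zero]

namespace IsNewtonSystem

variable {I : Ideal H} {N K : ℕ} {y : Fin N → A} {δ : MvPolynomial (Fin N) C}
  {f : Fin N → MvPolynomial (Fin N) C} {t : A}

lemma cons_of_transcendental (hy : IsNewtonSystem I y δ f K)
    (ht : ∀ s : (MvPolynomial (Fin N) C)[X],
      s.eval₂ (aeval y : MvPolynomial (Fin N) C →ₐ[C] A) t = 0 → aeval y s.leadingCoeff = 0) :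
    IsNewtonSystem I (Fin.cons t y : Fin (N + 1) → A) (rename Fin.succ δ)
      (Fin.cons 0 fun i ↦ rename Fin.succ (f i)) K where
  aeval_ne_zero := by simpa only [aeval_cons_rename_succ] using hy.aeval_ne_zero
  aeval_eq_zero := Fin.cases (by simp) fun i ↦ by
    simpa only [Fin.cons_succ, aeval_cons_rename_succ] using hy.aeval_eq_zero i
  exists_ker_le y' J hJ hδ hf := by
    cases y' using Fin.consCases with | _ t' y'
    rw [aeval_cons_rename_succ] at hδ
    obtain ⟨z, hz, hker⟩ := hy.exists_ker_le y' J hJ hδ fun i ↦ by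
      simpa only [Fin.cons_succ, aeval_cons_rename_succ] using hf i.succ
    refine ⟨Fin.cons t' z, Fin.cases (by simp) (by simpa using hz), fun F hF ↦ ?_⟩
    rw [RingHom.mem_ker, aeval_cons] at hF ⊢
    exact eval₂_eq_zero_of_forall_map_coeff (fun k ↦ hker <|
      map_coeff_eq_zero_of_eval₂_eq_zero hF (fun s _ ↦ ht s) k) t'

lemma exists_ker_le_cons [IsDomain H] [HenselianRing H I] (hy : IsNewtonSystem I y δ f K)
    {g : (MvPolynomial (Fin N) C)[X]}
    (hg : IsMinimalRelation (aeval y : MvPolynomial (Fin N) C →ₐ[C] A) t g)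
    {t' : H} {y' : Fin N → H} {J : Ideal H} (hJ : J ≤ I)
    {d : H} (hd : d = aeval y' δ * aeval y' g.leadingCoeff *
      g.derivative.eval₂ (aeval y' : MvPolynomial (Fin N) C →ₐ[C] H) t')
    (hd0 : d ≠ 0)
    (hg' : g.eval₂ (aeval y' : MvPolynomial (Fin N) C →ₐ[C] H) t' ∈ Ideal.span {d ^ (K + 3)} * J)
    (hf : ∀ i, aeval y' (f i) ∈ Ideal.span {d ^ (K + 3)} * J) :
    ∃ z : Fin (N + 1) → H, (∀ i, z i - (Fin.cons t' y' : Fin (N + 1) → H) i ∈ J) ∧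
      RingHom.ker (aeval (Fin.cons t y : Fin (N + 1) → A) : MvPolynomial _ C →ₐ[C] A) ≤
        RingHom.ker (aeval z : MvPolynomial _ C →ₐ[C] H) := by
  set a := aeval y' δ
  set b := aeval y' g.leadingCoeff
  set e := g.derivative.eval₂ (aeval y' : MvPolynomial (Fin N) C →ₐ[C] H) t'
  obtain ⟨⟨ha0, hb0⟩, -⟩ : (a ≠ 0 ∧ b ≠ 0) ∧ e ≠ 0 := by simpa [hd] using hd0
  have hspan : Ideal.span {d ^ (K + 3)} * J ≤ Ideal.span {a ^ K} * (Ideal.span {d ^ 3} * J) := by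
    rw [← mul_assoc, Ideal.span_singleton_mul_span_singleton]
    refine Ideal.mul_mono_left (Ideal.span_singleton_le_span_singleton.mpr ?_)
    exact ⟨(b * e) ^ K, by rw [pow_add, hd]; ring⟩
  obtain ⟨z, hz, hker⟩ := hy.exists_ker_le y' (Ideal.span {d ^ 3} * J)
    (Ideal.mul_le_right.trans hJ) ha0 fun i ↦ hspan (hf i)
  obtain ⟨i, hi, hroot⟩ := exists_eval₂_aeval_eq_add_mul hz t' g
  obtain ⟨j, hj, hderiv⟩ := exists_eval₂_aeval_eq_add_mul hz t' g.derivative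
  obtain ⟨k, hk, hlead⟩ := exists_eval₂_aeval_eq_add_mul hz t' (Polynomial.C g.leadingCoeff)
  obtain ⟨i', hi', hgt⟩ := Ideal.mem_span_singleton_mul.mp hg'
  obtain ⟨u, hu, hut⟩ := exists_isRoot_sub_mem hJ (d := d) (s := a * b)
    (p := g.map (aeval z : MvPolynomial (Fin N) C →ₐ[C] H)) (hd.trans (mul_comm _ _))
    (J.add_mem (J.mul_mem_left (d ^ K) hi') hi) hj
    (by rw [eval_map, hroot, ← hgt]; ring) (by rw [derivative_map, eval_map, hderiv])
  have hunit : IsUnit (1 + a * e * d ^ 2 * k) :=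
    isUnit_one_add_of_mem (hJ (J.mul_mem_left _ hk))
  have hlead0 : aeval z g.leadingCoeff ≠ 0 := by
    simp only [eval₂_C, RingHom.coe_coe] at hlead
    have hfactor : aeval z g.leadingCoeff = b * (1 + a * e * d ^ 2 * k) :=
      hlead.trans (by linear_combination (d ^ 2 * k) * hd)
    exact hfactor ▸ mul_ne_zero hb0 hunit.ne_zero
  have hzJ : ∀ l, z l - y' l ∈ J := fun l ↦ Ideal.mul_le_right (hz l)
  refine ⟨Fin.cons u z, Fin.cases (by simpa using hut) (by simpa using hzJ), fun F hF ↦ ?_⟩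
  rw [RingHom.mem_ker, aeval_cons] at hF ⊢
  exact hg.eval₂_eq_zero_of_ker_le hker (by rwa [← eval_map]) hlead0 hF

lemma cons_of_isMinimalRelation [IsDomain A] [CharZero A] [IsDomain H] [HenselianRing H I]
    (hy : IsNewtonSystem I y δ f K) {g : (MvPolynomial (Fin N) C)[X]}
    (hg : IsMinimalRelation (aeval y : MvPolynomial (Fin N) C →ₐ[C] A) t g) :
    IsNewtonSystem I (Fin.cons t y : Fin (N + 1) → A)
      (rename Fin.succ δ * rename Fin.succ g.leadingCoeff *
        (MvPolynomial.finSuccEquiv C N).symm g.derivative)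
      (Fin.cons ((MvPolynomial.finSuccEquiv C N).symm g) fun i ↦ rename Fin.succ (f i))
      (K + 3) where
  aeval_ne_zero := by
    simp only [map_mul, aeval_cons_rename_succ, aeval_cons_finSuccEquiv_symm]
    exact mul_ne_zero (mul_ne_zero hy.aeval_ne_zero hg.map_leadingCoeff_ne_zero)
      hg.eval₂_derivative_ne_zero
  aeval_eq_zero := Fin.cases
    (by simpa only [Fin.cons_zero, aeval_cons_finSuccEquiv_symm] using hg.eval₂_eq_zero)
    fun i ↦ by simpa only [Fin.cons_succ, aeval_cons_rename_succ] using hy.aeval_eq_zero i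
  exists_ker_le y' J hJ hδ hf := by
    cases y' using Fin.consCases with | _ t' y'
    simp only [map_mul, aeval_cons_rename_succ, aeval_cons_finSuccEquiv_symm] at hδ hf
    refine hy.exists_ker_le_cons hg hJ rfl hδ ?_ fun i ↦ ?_
    · simpa only [Fin.cons_zero, aeval_cons_finSuccEquiv_symm] using hf 0
    · simpa only [Fin.cons_succ, aeval_cons_rename_succ] using hf i.succ

end IsNewtonSystem

theorem exists_isNewtonSystem [IsDomain A] [CharZero A] [IsDomain H]
    (hinj : Function.Injective (algebraMap C A)) (I : Ideal H) [HenselianRing H I] {N : ℕ}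
    (y : Fin N → A) : ∃ (δ : MvPolynomial (Fin N) C) (f : Fin N → MvPolynomial (Fin N) C) (K : ℕ),
      IsNewtonSystem I y δ f K := by
  induction y using Fin.consInduction with
  | elim0 => exact ⟨_, _, _, isNewtonSystem_fin_zero hinj I _⟩
  | cons t y ih =>
    obtain ⟨δ, f, K, hy⟩ := ih
    by_cases ht : ∀ s : (MvPolynomial (Fin _) C)[X],
      s.eval₂ (aeval y : MvPolynomial (Fin _) C →ₐ[C] A) t = 0 → aeval y s.leadingCoeff = 0
    · exact ⟨_, _, _, hy.cons_of_transcendental ht⟩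
    · push Not at ht
      obtain ⟨s, hs, hlead⟩ := ht
      obtain ⟨g, hg⟩ := exists_isMinimalRelation hs hlead
      exact ⟨_, _, _, hy.cons_of_isMinimalRelation hg⟩

end NewtonSystem

end NewtonLemma

section FormalPowerSeries

open MvPowerSeries

section OrderIdeal

variable {σ R : Type*} [CommRing R] {c : ℕ} {a : MvPowerSeries σ R}

/-- The ideal of power series of order at least `c`. Congruence modulo this ideal measures how well
one power series approximates another. -/
def orderIdeal (σ R : Type*) [CommRing R] (c : ℕ) : Ideal (MvPowerSeries σ R) where
  carrier := {a | (c : ℕ∞) ≤ a.order}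
  add_mem' ha hb := (le_min ha hb).trans min_order_le_add
  zero_mem' := by simp
  smul_mem' _ _ ha := (le_add_left ha).trans le_order_mul

lemma mem_orderIdeal : a ∈ orderIdeal σ R c ↔ (c : ℕ∞) ≤ a.order := Iff.rfl

lemma mem_orderIdeal_iff_coeff :
    a ∈ orderIdeal σ R c ↔ ∀ d : σ →₀ ℕ, d.degree < c → coeff d a = 0 :=
  ⟨fun h _ hd ↦ coeff_of_lt_order (lt_of_lt_of_le (by exact_mod_cast hd) h), nat_le_order⟩

lemma orderIdeal_anti {c d : ℕ} (h : c ≤ d) : orderIdeal σ R d ≤ orderIdeal σ R c :=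
  fun _ ha ↦ mem_orderIdeal.2 ((Nat.cast_le.2 h).trans ha)

lemma mem_orderIdeal_one : a ∈ orderIdeal σ R 1 ↔ constantCoeff a = 0 := by
  rw [mem_orderIdeal, Nat.cast_one, one_le_order_iff_constCoeff_eq_zero]

lemma sub_truncTotal_mem_orderIdeal [Finite σ] (c : ℕ) (a : MvPowerSeries σ R) :
    a - (truncTotal c a : MvPowerSeries σ R) ∈ orderIdeal σ R c :=
  mem_orderIdeal_iff_coeff.2 fun d hd ↦ by
    rw [map_sub, MvPolynomial.coeff_coe, coeff_truncTotal a hd, sub_self]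

lemma exists_sub_coe_mem_orderIdeal [Finite σ] (c : ℕ) (a : MvPowerSeries σ R) :
    ∃ p : MvPolynomial σ R, a - (p : MvPowerSeries σ R) ∈ orderIdeal σ R c :=
  ⟨_, sub_truncTotal_mem_orderIdeal c a⟩

lemma degree_finsupp_cons {n : ℕ} (k : ℕ) (d : Fin n →₀ ℕ) :
    (d.cons k).degree = k + d.degree := by
  simp [Finsupp.degree_eq_sum, Fin.sum_univ_succ]

lemma mem_orderIdeal_iff_coeff_finSuccEquiv {n : ℕ} {a : MvPowerSeries (Fin (n + 1)) R} :
    a ∈ orderIdeal (Fin (n + 1)) R c ↔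
      ∀ k, PowerSeries.coeff k (finSuccEquiv R n a) ∈ orderIdeal (Fin n) R (c - k) := by
  simp only [mem_orderIdeal_iff_coeff, coeff_coeff_finSuccEquiv]
  refine ⟨fun h k d hd ↦ h _ ?_, fun h d hd ↦ ?_⟩
  · rw [degree_finsupp_cons]
    lia
  · rw [← Finsupp.cons_tail d, degree_finsupp_cons] at hd
    rw [← Finsupp.cons_tail d]
    exact h _ _ (by lia)

end OrderIdeal

section MaximalIdeal

variable {k : Type*} [Field k] {n : ℕ}

lemma mem_maximalIdeal_iff_constantCoeff {σ : Type*} {a : MvPowerSeries σ k} :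
    a ∈ IsLocalRing.maximalIdeal (MvPowerSeries σ k) ↔ constantCoeff a = 0 := by
  rw [IsLocalRing.mem_maximalIdeal, mem_nonunits_iff, isUnit_iff_constantCoeff, isUnit_iff_ne_zero,
    not_not]

lemma constantCoeff_constantCoeff_finSuccEquiv (a : MvPowerSeries (Fin (n + 1)) k) :
    constantCoeff (PowerSeries.constantCoeff (finSuccEquiv k n a)) = constantCoeff a := by
  rw [← coeff_zero_eq_constantCoeff_apply, ← PowerSeries.coeff_zero_eq_constantCoeff_apply,
    coeff_coeff_finSuccEquiv, Finsupp.cons_zero_zero, coeff_zero_eq_constantCoeff_apply]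

lemma exists_eq_X_zero_mul_add (a : MvPowerSeries (Fin (n + 1)) k) :
    ∃ q, a = X 0 * q + (finSuccEquiv k n).symm
      (PowerSeries.C (PowerSeries.constantCoeff (finSuccEquiv k n a))) := by
  obtain ⟨q, hq⟩ : PowerSeries.X ∣ finSuccEquiv k n a -
      PowerSeries.C (PowerSeries.constantCoeff (finSuccEquiv k n a)) := by
    simp [PowerSeries.X_dvd_iff]
  refine ⟨(finSuccEquiv k n).symm q, (finSuccEquiv k n).injective ?_⟩
  simp [finSuccEquiv_X_zero, ← hq]

lemma mem_span_X_of_constantCoeff_eq_zero {a : MvPowerSeries (Fin n) k}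
    (ha : constantCoeff a = 0) :
    a ∈ Ideal.span (Set.range (X : Fin n → MvPowerSeries (Fin n) k)) := by
  induction n with
  | zero =>
    have ha0 : a = 0 := by
      ext d
      rw [Subsingleton.elim d 0]
      simpa using ha
    simp [ha0]
  | succ n ih =>
    obtain ⟨q, hq⟩ := exists_eq_X_zero_mul_add a
    rw [hq]
    refine add_mem (Ideal.mul_mem_right _ _ (Ideal.subset_span ⟨0, rfl⟩)) ?_
    let φ := (finSuccEquiv k n).symm.toRingHom.comp PowerSeries.C
    have hmem := Ideal.mem_map_of_mem φ
      (ih ((constantCoeff_constantCoeff_finSuccEquiv a).trans ha))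
    rw [Ideal.map_span] at hmem
    refine Ideal.span_le.2 ?_ hmem
    rintro _ ⟨_, ⟨j, rfl⟩, rfl⟩
    refine Ideal.subset_span ⟨j.succ, (finSuccEquiv k n).injective ?_⟩
    simp [φ, finSuccEquiv_X_succ]

lemma maximalIdeal_eq_span_X : IsLocalRing.maximalIdeal (MvPowerSeries (Fin n) k) =
    Ideal.span (Set.range (X : Fin n → MvPowerSeries (Fin n) k)) := by
  refine le_antisymm (fun a ha ↦ ?_) (Ideal.span_le.2 ?_)
  · exact mem_span_X_of_constantCoeff_eq_zero (mem_maximalIdeal_iff_constantCoeff.1 ha)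
  · rintro _ ⟨i, rfl⟩
    exact mem_maximalIdeal_iff_constantCoeff.2 (constantCoeff_X i)

instance isAdicComplete_maximalIdeal_mvPowerSeries :
    IsAdicComplete (IsLocalRing.maximalIdeal (MvPowerSeries (Fin n) k))
      (MvPowerSeries (Fin n) k) := by
  rw [maximalIdeal_eq_span_X]
  infer_instance

end MaximalIdeal

lemma eq_zero_of_isDistinguishedAt_of_coe_dvd {A : Type*} [CommRing A] [IsLocalRing A]
    [IsAdicComplete (IsLocalRing.maximalIdeal A) A] {a r : Polynomial A}
    (ha : a.IsDistinguishedAt (IsLocalRing.maximalIdeal A)) (hr : r.degree < a.degree)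
    (hdvd : (a : PowerSeries A) ∣ r) : r = 0 := by
  obtain ⟨q, hq⟩ := hdvd
  have hne : IsLocalRing.maximalIdeal A ≠ ⊤ := Ideal.IsPrime.ne_top'
  refine ((ha.isWeierstrassDivisorAt hne).eq_zero_of_mul_eq ?_ hq.symm).2
  have horder := ha.coe_natDegree_eq_order_map (a : PowerSeries A) 1 (by simp) (by simp)
  rw [Polynomial.degree_eq_natDegree ha.monic.ne_zero] at hr
  rw [← horder]
  simpa using hr

section Substitution

variable {σ τ R : Type*} [CommRing R] {s : σ → MvPolynomial τ R}
  (hs : HasSubst fun i ↦ (s i : MvPowerSeries τ R))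

lemma substAlgHom_coe_eq_coe_aeval (p : MvPolynomial σ R) :
    substAlgHom hs (p : MvPowerSeries σ R) = (MvPolynomial.aeval s p : MvPolynomial τ R) := by
  rw [substAlgHom_coe]
  exact (MvPolynomial.comp_aeval_apply (φ := MvPolynomial.coeToMvPowerSeries.algHom R) s p).symm

lemma substAlgHom_mem_orderIdeal [IsReduced R] {c : ℕ} {a : MvPowerSeries σ R}
    (ha : a ∈ orderIdeal σ R c) : substAlgHom hs a ∈ orderIdeal τ R c := by
  have hone : 1 ≤ ⨅ i, (s i : MvPowerSeries τ R).order := le_iInf fun i ↦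
    one_le_order_iff_constCoeff_eq_zero.2 (hs.const_coeff i).eq_zero
  rw [mem_orderIdeal, substAlgHom_apply]
  calc (c : ℕ∞) ≤ 1 * a.order := by rwa [one_mul]
    _ ≤ (⨅ i, (s i : MvPowerSeries τ R).order) * a.order := by gcongr
    _ ≤ (subst (fun i ↦ (s i : MvPowerSeries τ R)) a).order := le_order_subst hs a

lemma substAlgHom_aeval {ι : Type*} (y : ι → MvPowerSeries σ R)
    (F : MvPolynomial ι (MvPolynomial σ R)) :
    substAlgHom hs (MvPolynomial.aeval y F) = MvPolynomial.aeval (fun i ↦ substAlgHom hs (y i))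
      (MvPolynomial.map (MvPolynomial.aeval s).toRingHom F) := by
  rw [MvPolynomial.aeval_def, MvPolynomial.aeval_def, MvPolynomial.eval₂_map]
  refine (MvPolynomial.hom_eval₂ F _ (substAlgHom hs).toRingHom y).trans ?_
  congr 1
  exact RingHom.ext (substAlgHom_coe_eq_coe_aeval hs)

end Substitution

section Shear

variable {n : ℕ}

section CommRing

variable {R : Type*} [CommRing R]

/-- The polynomials `x₀, x₁ + c₁ x₀, …, xₙ + cₙ x₀`. Substituting them is a linear change of
coordinates which, for suitable `c`, makes a given power series regular in `x₀`. -/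
noncomputable def shear (c : Fin n → R) : Fin (n + 1) → MvPolynomial (Fin (n + 1)) R :=
  Fin.cases (MvPolynomial.X 0)
    fun j ↦ MvPolynomial.X j.succ + MvPolynomial.C (c j) * MvPolynomial.X 0

@[simp]
lemma shear_zero (c : Fin n → R) : shear c 0 = MvPolynomial.X 0 := rfl

@[simp]
lemma shear_succ (c : Fin n → R) (j : Fin n) :
    shear c j.succ = MvPolynomial.X j.succ + MvPolynomial.C (c j) * MvPolynomial.X 0 := rfl

lemma hasSubst_shear (c : Fin n → R) :
    HasSubst fun i ↦ (shear c i : MvPowerSeries (Fin (n + 1)) R) :=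
  hasSubst_of_constantCoeff_zero <| Fin.cases (by simp) (by simp)

lemma aeval_shear_shear_neg (c : Fin n → R) (i : Fin (n + 1)) :
    MvPolynomial.aeval (shear c) (shear (-c) i) = MvPolynomial.X i := by
  refine Fin.cases ?_ (fun j ↦ ?_) i <;> simp [MvPolynomial.algebraMap_eq]

lemma substAlgHom_shear_neg (c : Fin n → R) (a : MvPowerSeries (Fin (n + 1)) R) :
    substAlgHom (hasSubst_shear c) (substAlgHom (hasSubst_shear (-c)) a) = a := by
  have hX (i : Fin (n + 1)) : subst (fun j ↦ (shear c j : MvPowerSeries (Fin (n + 1)) R))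
      (shear (-c) i : MvPowerSeries (Fin (n + 1)) R) = X i := by
    rw [← substAlgHom_apply (hasSubst_shear c), substAlgHom_coe_eq_coe_aeval,
      aeval_shear_shear_neg, MvPolynomial.coe_X]
  rw [substAlgHom_apply, substAlgHom_apply,
    subst_comp_subst_apply (hasSubst_shear _) (hasSubst_shear _)]
  simp only [hX]
  exact congrFun subst_self a

lemma algebraicIndependent_shear (c : Fin n → R) : AlgebraicIndependent R (shear c) := by
  refine Function.LeftInverse.injective (g := MvPolynomial.aeval (shear (-c))) fun p ↦ ?_
  have hX : (MvPolynomial.aeval (shear (-c))).comp (MvPolynomial.aeval (shear c)) =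
      AlgHom.id R (MvPolynomial (Fin (n + 1)) R) := MvPolynomial.algHom_ext fun i ↦ by
    simpa using aeval_shear_shear_neg (-c) i
  exact DFunLike.congr_fun hX p

lemma isHomogeneous_aeval_shear (c : Fin n → R) {d : ℕ} {p : MvPolynomial (Fin (n + 1)) R}
    (hp : p.IsHomogeneous d) : (MvPolynomial.aeval (shear c) p).IsHomogeneous d := by
  refine one_mul d ▸ hp.aeval (shear c) (Fin.cases (MvPolynomial.isHomogeneous_X _ _) fun j ↦ ?_)
  exact (MvPolynomial.isHomogeneous_X _ _).add
    ((MvPolynomial.isHomogeneous_X R 0).C_mul (c j))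

lemma isHomogeneous_truncTotal_succ {σ : Type*} [Finite σ] {d : ℕ} {a : MvPowerSeries σ R}
    (ha : a ∈ orderIdeal σ R d) : (truncTotal (d + 1) a).IsHomogeneous d := by
  classical
  intro e he
  rw [coeff_truncTotal_eq_ite] at he
  have hlt : e.degree < d + 1 := by by_contra h; simp [h] at he
  have hle : d ≤ e.degree := by
    by_contra! h
    simp [mem_orderIdeal_iff_coeff.1 ha e h] at he
  rw [Finsupp.degree_eq_weight_one] at hlt hle
  exact le_antisymm (Nat.le_of_lt_succ hlt) hle

lemma coeff_single_ne_zero_of_eval_cons_ne_zero {d : ℕ} {q : MvPolynomial (Fin (n + 1)) R}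
    (hq : q.IsHomogeneous d) {t : R} (ht : MvPolynomial.eval (Fin.cons t 0) q ≠ 0) :
    q.coeff (Finsupp.single 0 d) ≠ 0 := by
  refine fun hzero ↦ ht ?_
  rw [MvPolynomial.eval_eq]
  refine Finset.sum_eq_zero fun e he ↦ ?_
  by_cases hj : ∃ j : Fin n, e j.succ ≠ 0
  · obtain ⟨j, hj⟩ := hj
    rw [Finset.prod_eq_zero (i := j.succ) (by simpa using hj) (by simp [hj]), mul_zero]
  · push Not at hj
    have he0 : e = Finsupp.single 0 (e 0) := by
      ext i
      refine Fin.cases ?_ (fun j ↦ ?_) i <;> simp [hj]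
    have hd := hq (MvPolynomial.mem_support_iff.1 he)
    rw [he0, Finsupp.weight_single, Pi.one_apply, smul_eq_mul, mul_one] at hd
    rw [he0, hd, hzero, zero_mul]

end CommRing

section Field

variable {k : Type*} [Field k]

lemma eval_cons_zero_aeval_shear {x : Fin (n + 1) → k} (hx : x 0 ≠ 0)
    (p : MvPolynomial (Fin (n + 1)) k) :
    MvPolynomial.eval (Fin.cons (x 0) 0)
      (MvPolynomial.aeval (shear fun j ↦ x j.succ / x 0) p) = MvPolynomial.eval x p := by
  have hcomp : (MvPolynomial.aeval (Fin.cons (x 0) 0 : Fin (n + 1) → k)).comp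
      (MvPolynomial.aeval (shear fun j ↦ x j.succ / x 0)) = MvPolynomial.aeval (R := k) x :=
    MvPolynomial.algHom_ext <| Fin.cases (by simp) (by simp [hx])
  exact DFunLike.congr_fun hcomp p

lemma map_residue_finSuccEquiv_ne_zero {a : MvPowerSeries (Fin (n + 1)) k} {d : ℕ}
    (ha : coeff (Finsupp.single 0 d) a ≠ 0) :
    (finSuccEquiv k n a).map (IsLocalRing.residue (MvPowerSeries (Fin n) k)) ≠ 0 := by
  refine fun hzero ↦ ha ?_
  have hmem : PowerSeries.coeff d (finSuccEquiv k n a) ∈ IsLocalRing.maximalIdeal _ := by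
    simpa using congrArg (PowerSeries.coeff d) hzero
  rw [mem_maximalIdeal_iff_constantCoeff, ← coeff_zero_eq_constantCoeff_apply,
    coeff_coeff_finSuccEquiv] at hmem
  have hsingle : Finsupp.single 0 d = Finsupp.cons d (0 : Fin n →₀ ℕ) := by
    ext i
    refine Fin.cases ?_ (fun j ↦ ?_) i <;> simp
  rwa [hsingle]

lemma exists_map_residue_finSuccEquiv_shear_ne_zero [Infinite k]
    {a : MvPowerSeries (Fin (n + 1)) k} (ha : a ≠ 0) :
    ∃ c : Fin n → k, (finSuccEquiv k n (substAlgHom (hasSubst_shear c) a)).map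
      (IsLocalRing.residue (MvPowerSeries (Fin n) k)) ≠ 0 := by
  obtain ⟨e, he, horder⟩ := exists_coeff_ne_zero_and_order (ne_zero_iff_order_finite.1 ha)
  let p := truncTotal (e.degree + 1) a
  have hp_hom : p.IsHomogeneous e.degree := isHomogeneous_truncTotal_succ horder.le
  have hp : p ≠ 0 := by
    refine fun h ↦ he ?_
    rw [← coeff_truncTotal a e.degree.lt_add_one]
    exact congrArg (MvPolynomial.coeff e) h
  obtain ⟨x, hx⟩ : ∃ x, MvPolynomial.eval x (MvPolynomial.X 0 * p) ≠ 0 := by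
    by_contra! h
    exact mul_ne_zero (MvPolynomial.X_ne_zero 0) hp (MvPolynomial.funext (by simpa using h))
  rw [map_mul, MvPolynomial.eval_X] at hx
  have hx0 : x 0 ≠ 0 := left_ne_zero_of_mul hx
  refine ⟨fun j ↦ x j.succ / x 0, map_residue_finSuccEquiv_ne_zero (d := e.degree) ?_⟩
  set c : Fin n → k := fun j ↦ x j.succ / x 0
  have hlead : (MvPolynomial.aeval (shear c) p).coeff (Finsupp.single 0 e.degree) ≠ 0 := by
    refine coeff_single_ne_zero_of_eval_cons_ne_zero (t := x 0)
      (isHomogeneous_aeval_shear c hp_hom) ?_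
    rw [eval_cons_zero_aeval_shear hx0]
    exact right_ne_zero_of_mul hx
  have happrox := mem_orderIdeal_iff_coeff.1 (substAlgHom_mem_orderIdeal (hasSubst_shear c)
    (sub_truncTotal_mem_orderIdeal (e.degree + 1) a)) (Finsupp.single 0 e.degree) (by simp)
  rw [map_sub, map_sub, substAlgHom_coe_eq_coe_aeval, MvPolynomial.coeff_coe,
    sub_eq_zero] at happrox
  rwa [happrox]

end Field

end Shear

end FormalPowerSeries

section ArtinApproximation

open MvPowerSeries

section FiniteGeneration

open Polynomial

variable {R A : Type*} [CommRing R] [CommRing A] [Algebra R A]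

lemma exists_fg_subalgebra_forall_exists_map_eq {ι : Type*} [Finite ι] (P : ι → A[X]) :
    ∃ D : Subalgebra R A, D.FG ∧ ∀ i, ∃ Q : D[X], Q.map D.val.toRingHom = P i := by
  classical
  have := Fintype.ofFinite ι
  let T : Finset A := Finset.univ.biUnion fun i ↦ (P i).coeffs
  refine ⟨Algebra.adjoin R T, Subalgebra.fg_adjoin_finset T, fun i ↦ ?_⟩
  rw [← mem_lifts, lifts_iff_coeffs_subset_range]
  intro x hx
  exact ⟨⟨x, Algebra.subset_adjoin (Finset.mem_biUnion.2 ⟨i, Finset.mem_univ i, hx⟩)⟩, rfl⟩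

lemma exists_algHom_range_comp_eq {P B : Type*} [CommRing P] [Algebra R P] [CommRing B]
    [Algebra R B] {f : P →ₐ[R] A} {g : P →ₐ[R] B} (h : RingHom.ker f ≤ RingHom.ker g) :
    ∃ ψ : f.range →ₐ[R] B, ψ.comp f.rangeRestrict = g := by
  refine ⟨(Ideal.Quotient.liftₐ (RingHom.ker f) g h).comp
    (Ideal.quotientKerEquivRange f).symm.toAlgHom, AlgHom.ext fun F ↦ ?_⟩
  have hF : (Ideal.quotientKerEquivRange f).symm (f.rangeRestrict F) = Ideal.Quotient.mk _ F :=
    (AlgEquiv.symm_apply_eq _).2 rfl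
  exact congrArg (Ideal.Quotient.liftₐ (RingHom.ker f) g h) hF

end FiniteGeneration

variable {k : Type*} [Field k]

lemma algebraMap_mvPolynomial_eq_coe {σ : Type*} (p : MvPolynomial σ k) :
    algebraMap (MvPolynomial σ k) (MvPowerSeries σ k) p = p := by
  rw [algebraMap_apply', Algebra.algebraMap_self, map_id, RingHom.id_apply]

lemma algebraMap_mvPolynomial_injective {σ : Type*} :
    Function.Injective (algebraMap (MvPolynomial σ k) (MvPowerSeries σ k)) := fun p q h ↦ by
  rw [algebraMap_mvPolynomial_eq_coe, algebraMap_mvPolynomial_eq_coe] at h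
  exact MvPolynomial.coe_injective _ _ h

section PolynomialToSeries

open Polynomial

variable {n : ℕ} {D : Type*} [CommRing D] [Algebra (MvPolynomial (Fin n) k) D]

/-- A polynomial in `x₀` whose coefficients are interpreted as power series in `x₁, …, xₙ` through
`φ`, regarded as a power series in `x₀, …, xₙ`. -/
noncomputable def polynomialToSeries (φ : D →ₐ[MvPolynomial (Fin n) k] MvPowerSeries (Fin n) k) :
    D[X] →+* MvPowerSeries (Fin (n + 1)) k :=
  (MvPowerSeries.finSuccEquiv k n).symm.toRingHom.comp
    (coeToPowerSeries.ringHom.comp (mapRingHom φ.toRingHom))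

/-- A polynomial in `x₀, …, xₙ`, regarded as a polynomial in `x₀` over an algebra containing the
polynomials in `x₁, …, xₙ`. -/
noncomputable def splitPolynomial (D : Type*) [CommRing D] [Algebra (MvPolynomial (Fin n) k) D] :
    MvPolynomial (Fin (n + 1)) k →+* D[X] :=
  (mapRingHom (algebraMap (MvPolynomial (Fin n) k) D)).comp
    (MvPolynomial.finSuccEquiv k n).toRingEquiv.toRingHom

variable (φ : D →ₐ[MvPolynomial (Fin n) k] MvPowerSeries (Fin n) k)

lemma finSuccEquiv_polynomialToSeries (g : D[X]) :
    MvPowerSeries.finSuccEquiv k n (polynomialToSeries φ g) = (g.map φ.toRingHom : PowerSeries _) :=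
  (MvPowerSeries.finSuccEquiv k n).apply_symm_apply _

lemma polynomialToSeries_splitPolynomial (p : MvPolynomial (Fin (n + 1)) k) :
    polynomialToSeries φ (splitPolynomial D p) = p := by
  suffices h : (polynomialToSeries φ).comp (splitPolynomial D) = algebraMap _ _ by
    rw [← algebraMap_mvPolynomial_eq_coe, ← h, RingHom.comp_apply]
  refine MvPolynomial.ringHom_ext (fun r ↦ ?_) (fun i ↦ ?_) <;>
    rw [algebraMap_mvPolynomial_eq_coe, RingHom.comp_apply] <;>
    refine (MvPowerSeries.finSuccEquiv k n).injective ?_ <;>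
    rw [finSuccEquiv_polynomialToSeries]
  · simp [splitPolynomial, MvPolynomial.finSuccEquiv_apply, MvPowerSeries.finSuccEquiv_C,
      algebraMap_mvPolynomial_eq_coe]
  · refine Fin.cases ?_ (fun j ↦ ?_) i
    · simp [splitPolynomial, MvPolynomial.finSuccEquiv_X_zero, MvPowerSeries.finSuccEquiv_X_zero]
    · simp [splitPolynomial, MvPolynomial.finSuccEquiv_X_succ, MvPowerSeries.finSuccEquiv_X_succ,
        algebraMap_mvPolynomial_eq_coe]

lemma aeval_polynomialToSeries {ι : Type*} (Y : ι → D[X])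
    (F : MvPolynomial ι (MvPolynomial (Fin (n + 1)) k)) :
    MvPolynomial.aeval (fun i ↦ polynomialToSeries φ (Y i)) F =
      polynomialToSeries φ (MvPolynomial.eval₂ (splitPolynomial D) Y F) := by
  rw [MvPolynomial.hom_eval₂, MvPolynomial.aeval_def]
  congr 1
  exact RingHom.ext fun p ↦ by
    rw [algebraMap_mvPolynomial_eq_coe, RingHom.comp_apply, polynomialToSeries_splitPolynomial]

lemma polynomialToSeries_sub_mem_orderIdeal
    {φ φ' : D →ₐ[MvPolynomial (Fin n) k] MvPowerSeries (Fin n) k} {c : ℕ}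
    (h : ∀ d, φ d - φ' d ∈ orderIdeal (Fin n) k c) (g : D[X]) :
    polynomialToSeries φ g - polynomialToSeries φ' g ∈ orderIdeal (Fin (n + 1)) k c := by
  refine mem_orderIdeal_iff_coeff_finSuccEquiv.2 fun j ↦ ?_
  rw [map_sub, finSuccEquiv_polynomialToSeries, finSuccEquiv_polynomialToSeries, map_sub,
    coeff_coe, coeff_coe, Polynomial.coeff_map, Polynomial.coeff_map]
  exact orderIdeal_anti (Nat.sub_le _ _) (h _)

lemma polynomialToSeries_X : polynomialToSeries φ X = X 0 := by
  have hX := polynomialToSeries_splitPolynomial φ (MvPolynomial.X 0)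
  have hsplit : splitPolynomial D (MvPolynomial.X 0 : MvPolynomial (Fin (n + 1)) k) =
      Polynomial.X := by
    simp [splitPolynomial, MvPolynomial.finSuccEquiv_X_zero]
  rwa [hsplit, MvPolynomial.coe_X] at hX

lemma polynomialToSeries_C (d : D) : polynomialToSeries φ (C d) = rename Fin.succ (φ d) := by
  refine (MvPowerSeries.finSuccEquiv k n).injective ?_
  rw [finSuccEquiv_polynomialToSeries, Polynomial.map_C, Polynomial.coe_C]
  ext j e
  rw [coeff_coeff_finSuccEquiv, PowerSeries.coeff_C]
  split_ifs with hj
  · have he : e.cons 0 = Finsupp.embDomain (Fin.succEmb n) e := by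
      ext i
      refine Fin.cases ?_ (fun i ↦ ?_) i
      · simp [Finsupp.embDomain_of_notMem_range]
      · exact (Finsupp.embDomain_apply_self (Fin.succEmb n) e i).symm
    rw [hj, he]
    exact (coeff_embDomain_rename (Fin.succEmb n) _ _).symm
  · refine (coeff_rename_eq_zero Fin.succ (φ d) ?_).symm
    rintro ⟨e', he'⟩
    refine hj ?_
    rw [← Finsupp.cons_zero j e, ← he']
    exact Finsupp.mapDomain_of_notMem_range _ _ (by simp)

lemma polynomialToSeries_ne_zero {a : D[X]} (ha : a.Monic) : polynomialToSeries φ a ≠ 0 := by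
  intro h
  have hzero := finSuccEquiv_polynomialToSeries φ a
  rw [h, map_zero, eq_comm, ← Polynomial.coe_zero, Polynomial.coe_inj] at hzero
  exact (ha.map φ.toRingHom).ne_zero hzero

variable {φ} in
lemma exists_eq_mul_of_polynomialToSeries_eq_mul (hφ : Function.Injective φ) {a F : D[X]}
    (ha : (a.map φ.toRingHom).IsDistinguishedAt (IsLocalRing.maximalIdeal _))
    {z : MvPowerSeries (Fin (n + 1)) k}
    (h : polynomialToSeries φ F = polynomialToSeries φ a * z) :
    ∃ B, F = a * B ∧ polynomialToSeries φ B = z := by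
  have := φ.toRingHom.domain_nontrivial
  have ha_monic : a.Monic := monic_of_injective hφ ha.monic
  have hdiv := modByMonic_add_div F a
  have hmod : F %ₘ a = 0 := by
    refine (Polynomial.map_eq_zero_iff (f := φ.toRingHom) hφ).1
      (eq_zero_of_isDistinguishedAt_of_coe_dvd ha ?_ ?_)
    · rw [degree_map_eq_of_injective hφ, degree_map_eq_of_injective hφ]
      exact degree_modByMonic_lt _ ha_monic
    · rw [← finSuccEquiv_polynomialToSeries, ← finSuccEquiv_polynomialToSeries,
        eq_sub_of_add_eq hdiv, map_sub, h, map_mul, ← mul_sub, map_mul]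
      exact dvd_mul_right _ _
  rw [hmod, zero_add] at hdiv
  refine ⟨F /ₘ a, hdiv.symm, mul_left_cancel₀ (polynomialToSeries_ne_zero φ ha_monic) ?_⟩
  rw [← map_mul, hdiv, h]

end PolynomialToSeries

section WeierstrassModel

open Polynomial

variable {n : ℕ}

/-- By Weierstrass division, `N` power series `y i` agree, modulo the Weierstrass polynomial `a` of
`g` and to any order, with polynomials `Y i` in `x₀`; only finitely many power series in the
remaining variables occur as coefficients. -/
lemma exists_fg_subalgebra_weierstrass {N : ℕ} {g : MvPowerSeries (Fin (n + 1)) k}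
    (hg : (MvPowerSeries.finSuccEquiv k n g).map (IsLocalRing.residue _) ≠ 0)
    (y : Fin N → MvPowerSeries (Fin (n + 1)) k) (c : ℕ) :
    ∃ D : Subalgebra (MvPolynomial (Fin n) k) (MvPowerSeries (Fin n) k), D.FG ∧
      ∃ (a : D[X]) (Y : Fin N → D[X]) (η : MvPowerSeries (Fin (n + 1)) k),
        (a.map D.val.toRingHom).IsDistinguishedAt (IsLocalRing.maximalIdeal _) ∧ IsUnit η ∧
        g = polynomialToSeries D.val a * η ∧
        ∀ i, polynomialToSeries D.val (Y i) - y i ∈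
          Ideal.span {polynomialToSeries D.val a} * orderIdeal (Fin (n + 1)) k c := by
  let e := MvPowerSeries.finSuccEquiv k n
  obtain ⟨w, u, hfactor⟩ := PowerSeries.exists_isWeierstrassFactorization hg
  choose q r hdivision using fun i ↦ PowerSeries.exists_isWeierstrassDivision (e (y i)) hg
  choose p hp using fun i ↦ exists_sub_coe_mem_orderIdeal c (e.symm (u * q i))
  obtain ⟨D, hD, hlift⟩ := exists_fg_subalgebra_forall_exists_map_eq
    (R := MvPolynomial (Fin n) k) (Fin.cons w r : Fin (N + 1) → (MvPowerSeries (Fin n) k)[X])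
  choose P hP using hlift
  have ha : e (polynomialToSeries D.val (P 0)) = w :=
    (finSuccEquiv_polynomialToSeries _ _).trans (congrArg _ (hP 0))
  have hr (i : Fin N) : e (polynomialToSeries D.val (P i.succ)) = r i :=
    (finSuccEquiv_polynomialToSeries _ _).trans (congrArg _ (hP i.succ))
  refine ⟨D, hD, P 0, fun i ↦ P i.succ + P 0 * splitPolynomial D (p i), e.symm u,
    hP 0 ▸ hfactor.isDistinguishedAt, hfactor.isUnit.map e.symm, e.injective ?_, fun i ↦ ?_⟩
  · rw [map_mul, ha, e.apply_symm_apply, ← hfactor.eq_mul]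
  · have hy : y i = polynomialToSeries D.val (P 0) * e.symm (u * q i) +
        polynomialToSeries D.val (P i.succ) := by
      refine e.injective ?_
      rw [map_add, map_mul, e.apply_symm_apply, ha, hr, ← mul_assoc, ← hfactor.eq_mul]
      exact (hdivision i).eq_mul_add
    refine Ideal.mem_span_singleton_mul.2 ⟨_, neg_mem (hp i), ?_⟩
    rw [map_add, map_mul (polynomialToSeries D.val), polynomialToSeries_splitPolynomial]
    linear_combination hy

lemma exists_eval₂_splitPolynomial_eq_mul {N : ℕ} {y : Fin N → MvPowerSeries (Fin (n + 1)) k}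
    {δ : MvPolynomial (Fin N) (MvPolynomial (Fin (n + 1)) k)}
    {f : Fin N → MvPolynomial (Fin N) (MvPolynomial (Fin (n + 1)) k)} {c : ℕ} (hc : 1 ≤ c)
    (hδ : (MvPowerSeries.finSuccEquiv k n (MvPolynomial.aeval y δ)).map
      (IsLocalRing.residue _) ≠ 0)
    (hf : ∀ i, MvPolynomial.aeval y (f i) = 0) :
    ∃ D : Subalgebra (MvPolynomial (Fin n) k) (MvPowerSeries (Fin n) k), D.FG ∧
      ∃ (a W : D[X]) (Y B : Fin N → D[X]), a.Monic ∧
        (∀ i, polynomialToSeries D.val (Y i) - y i ∈ orderIdeal (Fin (n + 1)) k c) ∧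
        MvPolynomial.eval₂ (splitPolynomial D) Y δ = a * W ∧
        constantCoeff (polynomialToSeries D.val W) ≠ 0 ∧
        ∀ i, MvPolynomial.eval₂ (splitPolynomial D) Y (f i) = a * B i ∧
          polynomialToSeries D.val (B i) ∈ orderIdeal (Fin (n + 1)) k c := by
  obtain ⟨D, hD, a, Y, η, ha, hη, hfactor, hY⟩ := exists_fg_subalgebra_weierstrass hδ y c
  have hval : Function.Injective D.val := Subtype.val_injective
  have hF (F : MvPolynomial (Fin N) (MvPolynomial (Fin (n + 1)) k)) :
      ∃ z ∈ orderIdeal (Fin (n + 1)) k c, polynomialToSeries D.val a * z =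
        polynomialToSeries D.val (MvPolynomial.eval₂ (splitPolynomial D) Y F) -
          MvPolynomial.aeval y F := by
    rw [← aeval_polynomialToSeries, ← Ideal.mem_span_singleton_mul]
    exact aeval_sub_aeval_mem hY F
  obtain ⟨z, hz, hza⟩ := hF δ
  obtain ⟨W, hW, hWz⟩ := exists_eq_mul_of_polynomialToSeries_eq_mul
    (F := MvPolynomial.eval₂ (splitPolynomial D) Y δ) (z := z + η) hval ha
    (by rw [mul_add, hza, ← hfactor, sub_add_cancel])
  have hB (i : Fin N) : ∃ B, MvPolynomial.eval₂ (splitPolynomial D) Y (f i) = a * B ∧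
      polynomialToSeries D.val B ∈ orderIdeal (Fin (n + 1)) k c := by
    obtain ⟨z, hz, hza⟩ := hF (f i)
    rw [hf, sub_zero] at hza
    obtain ⟨B, hB, rfl⟩ := exists_eq_mul_of_polynomialToSeries_eq_mul hval ha hza.symm
    exact ⟨B, hB, hz⟩
  choose B hB using hB
  refine ⟨D, hD, a, W, Y, B, monic_of_injective hval ha.monic,
    fun i ↦ Ideal.mul_le_right (hY i), hW, ?_, hB⟩
  rw [hWz, map_add, mem_orderIdeal_one.1 (orderIdeal_anti hc hz), zero_add]
  exact (isUnit_iff_constantCoeff.1 hη).ne_zero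

end WeierstrassModel

/-- A family of rings of power series, one for each number of variables, with the closure properties
that make Artin approximation work: each ring contains the polynomials and is Henselian, and the
family is stable under substitution of algebraically independent polynomials. -/
structure HenselianSystem (k : Type*) [Field k] where
  /-- The ring of power series in `n` variables. -/
  ring (n : ℕ) : Subalgebra (MvPolynomial (Fin n) k) (MvPowerSeries (Fin n) k)
  subst_mem {m n : ℕ} {s : Fin m → MvPolynomial (Fin n) k}
    (hs : HasSubst fun i ↦ (s i : MvPowerSeries (Fin n) k)) (hind : AlgebraicIndependent k s)
    {a : MvPowerSeries (Fin m) k} (ha : a ∈ ring m) : substAlgHom hs a ∈ ring n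
  henselianRing (n : ℕ) :
    HenselianRing (ring n) ((orderIdeal (Fin n) k 1).comap (ring n).val)

namespace HenselianSystem

variable (S : HenselianSystem k) {n : ℕ}

attribute [instance] HenselianSystem.henselianRing

/-- The ideal of elements of order at least `c`. -/
noncomputable abbrev orderIdeal (n c : ℕ) : Ideal (S.ring n) :=
  (_root_.orderIdeal (Fin n) k c).comap (S.ring n).val

/-- Artin approximation in `n` variables: every tuple of formal power series is approximated, to any
order, by a tuple in the ring that satisfies all the polynomial relations of the given one. -/
def HasApproximation (n : ℕ) : Prop :=
  ∀ (N : ℕ) (y : Fin N → MvPowerSeries (Fin n) k) (c : ℕ), ∃ z : Fin N → S.ring n,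
    (∀ i, (z i : MvPowerSeries (Fin n) k) - y i ∈ _root_.orderIdeal (Fin n) k c) ∧
    RingHom.ker (MvPolynomial.aeval (R := MvPolynomial (Fin n) k) y) ≤
      RingHom.ker (MvPolynomial.aeval (R := MvPolynomial (Fin n) k) z)

variable {S}

lemma coe_aeval {ι : Type*} (w : ι → S.ring n) (F : MvPolynomial ι (MvPolynomial (Fin n) k)) :
    ((MvPolynomial.aeval w F : S.ring n) : MvPowerSeries (Fin n) k) =
      MvPolynomial.aeval (fun i ↦ (w i : MvPowerSeries (Fin n) k)) F :=
  MvPolynomial.comp_aeval_apply (φ := (S.ring n).val) w F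

lemma HasApproximation.exists_algHom (hS : S.HasApproximation n)
    {D : Subalgebra (MvPolynomial (Fin n) k) (MvPowerSeries (Fin n) k)} (hD : D.FG) (c : ℕ) :
    ∃ ψ : D →ₐ[MvPolynomial (Fin n) k] S.ring n,
      ∀ d, (ψ d : MvPowerSeries (Fin n) k) - d ∈ _root_.orderIdeal (Fin n) k c := by
  obtain ⟨N, y, rfl⟩ : ∃ (N : ℕ) (y : Fin N → MvPowerSeries (Fin n) k),
      D = (MvPolynomial.aeval (R := MvPolynomial (Fin n) k) y).range := by
    obtain ⟨s, hs, rfl⟩ := Subalgebra.fg_def.1 hD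
    obtain ⟨N, y, -, rfl⟩ := hs.fin_param
    exact ⟨N, y, Algebra.adjoin_range_eq_range_aeval _ _⟩
  obtain ⟨z, hz, hker⟩ := hS N y c
  obtain ⟨ψ, hψ⟩ := exists_algHom_range_comp_eq hker
  refine ⟨ψ, ?_⟩
  rintro ⟨_, F, rfl⟩
  have hF : ψ ⟨MvPolynomial.aeval y F, F, rfl⟩ = MvPolynomial.aeval z F := DFunLike.congr_fun hψ F
  have happrox := aeval_sub_aeval_mem hz F
  rw [← coe_aeval, ← hF] at happrox
  exact happrox

lemma isUnit_of_constantCoeff_ne_zero {a : S.ring n}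
    (ha : constantCoeff (a : MvPowerSeries (Fin n) k) ≠ 0) : IsUnit a := by
  let r : S.ring n := algebraMap (MvPolynomial (Fin n) k) _
    (MvPolynomial.C (constantCoeff (a : MvPowerSeries (Fin n) k))⁻¹)
  have hmem : a * r - 1 ∈ S.orderIdeal n 1 := mem_orderIdeal_one.2 <| by
    simp [r, algebraMap_mvPolynomial_eq_coe, ha]
  have hunit := isUnit_one_add_of_mem hmem
  rw [add_sub_cancel] at hunit
  exact isUnit_of_mul_isUnit_left hunit

lemma rename_succ_mem {a : MvPowerSeries (Fin n) k} (ha : a ∈ S.ring n) :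
    rename Fin.succ a ∈ S.ring (n + 1) := by
  have hs : HasSubst fun j : Fin n ↦
      ((MvPolynomial.X j.succ : MvPolynomial (Fin (n + 1)) k) : MvPowerSeries (Fin (n + 1)) k) :=
    hasSubst_of_constantCoeff_zero fun j ↦ by simp
  have hmem := S.subst_mem hs
    ((MvPolynomial.algebraicIndependent_X _ k).comp _ (Fin.succ_injective n)) ha
  rw [substAlgHom_apply] at hmem
  rw [rename_eq_subst]
  convert hmem with j
  rw [Function.comp_apply, MvPolynomial.coe_X]

lemma polynomialToSeries_mem {D : Type*} [CommRing D] [Algebra (MvPolynomial (Fin n) k) D]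
    (ψ : D →ₐ[MvPolynomial (Fin n) k] S.ring n) (g : Polynomial D) :
    polynomialToSeries ((S.ring n).val.comp ψ) g ∈ S.ring (n + 1) := by
  induction g using Polynomial.induction_on' with
  | add p q hp hq => rw [map_add]; exact add_mem hp hq
  | monomial j d =>
    rw [← Polynomial.C_mul_X_pow_eq_monomial, map_mul, map_pow, polynomialToSeries_C,
      polynomialToSeries_X]
    refine mul_mem (rename_succ_mem (ψ d).2) (pow_mem ?_ _)
    have hX := (S.ring (n + 1)).algebraMap_mem (MvPolynomial.X 0)
    rwa [algebraMap_mvPolynomial_eq_coe, MvPolynomial.coe_X] at hX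

/-- The system `δ ≠ 0`, `f = 0`, solved by `y`, has approximate solutions in the ring that agree
with `y` to order `c` and are good enough for Newton's lemma with exponent `K`. -/
def HasApproximateSolution (S : HenselianSystem k) {N : ℕ} (y : Fin N → MvPowerSeries (Fin n) k)
    (δ : MvPolynomial (Fin N) (MvPolynomial (Fin n) k))
    (f : Fin N → MvPolynomial (Fin N) (MvPolynomial (Fin n) k)) (K c : ℕ) : Prop :=
  ∃ y' : Fin N → S.ring n,
    (∀ i, (y' i : MvPowerSeries (Fin n) k) - y i ∈ _root_.orderIdeal (Fin n) k c) ∧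
    MvPolynomial.aeval y' δ ≠ 0 ∧
    ∀ i, MvPolynomial.aeval y' (f i) ∈
      Ideal.span {MvPolynomial.aeval y' δ ^ K} * S.orderIdeal n c

section InductionStep

variable {N : ℕ} {y : Fin N → MvPowerSeries (Fin (n + 1)) k}
  {δ : MvPolynomial (Fin N) (MvPolynomial (Fin (n + 1)) k)}
  {f : Fin N → MvPolynomial (Fin N) (MvPolynomial (Fin (n + 1)) k)} {K c : ℕ}

lemma hasApproximateSolution_of_map_residue_ne_zero (hS : S.HasApproximation n) (hK : K ≠ 0)
    (hc : 1 ≤ c)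
    (hδ : (finSuccEquiv k n (MvPolynomial.aeval y δ)).map (IsLocalRing.residue _) ≠ 0)
    (hf : ∀ i, MvPolynomial.aeval y (f i) = 0) : S.HasApproximateSolution y δ f K c := by
  obtain ⟨D, hD, a, W, Y, B, ha, hY, hδW, hW, hB⟩ :=
    exists_eval₂_splitPolynomial_eq_mul (δ := δ ^ K) (f := f) hc
      (by rw [map_pow, map_pow, map_pow]; exact pow_ne_zero _ hδ) hf
  obtain ⟨ψ, hψ⟩ := hS.exists_algHom hD c
  let Φ : Polynomial D →+* S.ring (n + 1) :=
    (polynomialToSeries ((S.ring n).val.comp ψ)).codRestrict _ (polynomialToSeries_mem ψ)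
  have hΦ (g : Polynomial D) : (Φ g : MvPowerSeries (Fin (n + 1)) k) -
      polynomialToSeries D.val g ∈ _root_.orderIdeal (Fin (n + 1)) k c :=
    polynomialToSeries_sub_mem_orderIdeal hψ g
  have haeval (F : MvPolynomial (Fin N) (MvPolynomial (Fin (n + 1)) k)) :
      MvPolynomial.aeval (fun i ↦ Φ (Y i)) F = Φ (MvPolynomial.eval₂ (splitPolynomial D) Y F) :=
    Subtype.ext ((coe_aeval _ F).trans (aeval_polynomialToSeries _ Y F))
  have hδΦ : MvPolynomial.aeval (fun i ↦ Φ (Y i)) δ ^ K = Φ a * Φ W := by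
    rw [← map_pow, haeval, hδW, map_mul]
  have hΦa : Φ a ≠ 0 := fun h ↦ polynomialToSeries_ne_zero _ ha (congrArg Subtype.val h)
  obtain ⟨u, hu⟩ : IsUnit (Φ W) := by
    have hconst := mem_orderIdeal_one.1 (orderIdeal_anti hc (hΦ W))
    rw [map_sub, sub_eq_zero] at hconst
    exact isUnit_of_constantCoeff_ne_zero (hconst ▸ hW)
  refine ⟨fun i ↦ Φ (Y i), fun i ↦ ?_, fun h ↦ ?_, fun i ↦ ?_⟩
  · rw [← sub_add_sub_cancel _ (polynomialToSeries D.val (Y i))]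
    exact add_mem (hΦ _) (hY i)
  · rw [h, zero_pow hK, ← hu] at hδΦ
    exact hΦa ((Units.mul_left_eq_zero u).1 hδΦ.symm)
  · refine Ideal.mem_span_singleton_mul.2 ⟨↑u⁻¹ * Φ (B i), Ideal.mul_mem_left _ _ ?_, ?_⟩
    · rw [Ideal.mem_comap, ← sub_add_cancel ((S.ring (n + 1)).val (Φ (B i)))]
      exact add_mem (hΦ _) (hB i).2
    · rw [hδΦ, ← hu, mul_assoc, Units.mul_inv_cancel_left, haeval, (hB i).1, map_mul]

/-- A generic shear makes `δ(y)` regular in the first variable. -/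
lemma hasApproximateSolution [Infinite k] (hS : S.HasApproximation n) (hK : K ≠ 0) (hc : 1 ≤ c)
    (hδ : MvPolynomial.aeval y δ ≠ 0) (hf : ∀ i, MvPolynomial.aeval y (f i) = 0) :
    S.HasApproximateSolution y δ f K c := by
  obtain ⟨t, ht⟩ := exists_map_residue_finSuccEquiv_shear_ne_zero hδ
  let ρ := substAlgHom (R := k) (hasSubst_shear t)
  let ρ' : S.ring (n + 1) →+* S.ring (n + 1) :=
    ((substAlgHom (R := k) (hasSubst_shear (-t))).toRingHom.comp
      (S.ring (n + 1)).val.toRingHom).codRestrict _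
      fun a ↦ S.subst_mem (hasSubst_shear (-t)) (algebraicIndependent_shear (-t)) a.2
  let T : MvPolynomial (Fin N) (MvPolynomial (Fin (n + 1)) k) →+* _ :=
    MvPolynomial.map (MvPolynomial.aeval (shear t)).toRingHom
  have hρ (a : S.ring (n + 1)) : ρ (ρ' a) = a := substAlgHom_shear_neg t _
  have hρ' (a : MvPowerSeries (Fin (n + 1)) k) :
      substAlgHom (hasSubst_shear (-t)) (ρ a) = a := by
    simpa only [neg_neg] using substAlgHom_shear_neg (-t) a
  have hρ_inj : Function.Injective ρ := Function.LeftInverse.injective hρ'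
  obtain ⟨y', hy', hδ', hf'⟩ := hasApproximateSolution_of_map_residue_ne_zero
    (y := fun i ↦ ρ (y i)) (δ := T δ) (f := fun i ↦ T (f i)) hS hK hc
    (by rwa [← substAlgHom_aeval]) fun i ↦ by
      rw [← substAlgHom_aeval, hf, map_zero]
  have haeval (F : MvPolynomial (Fin N) (MvPolynomial (Fin (n + 1)) k)) :
      MvPolynomial.aeval (fun i ↦ ρ' (y' i)) F = ρ' (MvPolynomial.aeval y' (T F)) := by
    refine Subtype.ext (hρ_inj ?_)
    rw [hρ, coe_aeval, coe_aeval, substAlgHom_aeval]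
    simp only [hρ, ρ, T]
  refine ⟨fun i ↦ ρ' (y' i), fun i ↦ ?_, fun h ↦ hδ' ?_, fun i ↦ ?_⟩
  · have hmem := substAlgHom_mem_orderIdeal (hasSubst_shear (-t)) (hy' i)
    rwa [map_sub, hρ'] at hmem
  · rw [haeval] at h
    rw [← ZeroMemClass.coe_eq_zero, ← hρ, h, ZeroMemClass.coe_zero, map_zero]
  · obtain ⟨v, hv, hfv⟩ := Ideal.mem_span_singleton_mul.1 (hf' i)
    refine Ideal.mem_span_singleton_mul.2
      ⟨ρ' v, substAlgHom_mem_orderIdeal (hasSubst_shear (-t)) hv, ?_⟩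
    rw [haeval, haeval, ← hfv, map_mul, map_pow]

end InductionStep

lemma HasApproximation.succ [CharZero k] (hS : S.HasApproximation n) :
    S.HasApproximation (n + 1) := by
  intro N y c
  have : IsDomain (MvPowerSeries (Fin (n + 1)) k) := NoZeroDivisors.to_isDomain _
  have : CharZero (MvPowerSeries (Fin (n + 1)) k) := algebraRat.charZero _
  obtain ⟨δ, f, K, hsystem⟩ := exists_isNewtonSystem (C := MvPolynomial (Fin (n + 1)) k)
    (H := S.ring (n + 1)) algebraMap_mvPolynomial_injective (S.orderIdeal (n + 1) 1) y
  obtain ⟨y', hy', hδ, hf⟩ := hasApproximateSolution hS K.succ_ne_zero (Nat.le_add_left 1 c)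
    hsystem.aeval_ne_zero hsystem.aeval_eq_zero
  have hpow : Ideal.span {MvPolynomial.aeval y' δ ^ (K + 1)} ≤
      Ideal.span {MvPolynomial.aeval y' δ ^ K} :=
    Ideal.span_singleton_le_span_singleton.2 (pow_dvd_pow _ K.le_succ)
  obtain ⟨z, hz, hker⟩ := hsystem.exists_ker_le y' (S.orderIdeal (n + 1) (c + 1))
    (Ideal.comap_mono (orderIdeal_anti (Nat.le_add_left 1 c))) hδ
    fun i ↦ Ideal.mul_mono_left hpow (hf i)
  refine ⟨z, fun i ↦ orderIdeal_anti c.le_succ ?_, hker⟩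
  rw [← sub_add_sub_cancel _ (y' i : MvPowerSeries (Fin (n + 1)) k)]
  exact add_mem (hz i) (hy' i)

theorem hasApproximation [CharZero k] (S : HenselianSystem k) (n : ℕ) : S.HasApproximation n := by
  induction n with
  | zero =>
    intro N y c
    have hy (i : Fin N) : y i ∈ S.ring 0 := by
      have hconst : y i = algebraMap (MvPolynomial (Fin 0) k) _
          (MvPolynomial.C (constantCoeff (y i))) := by
        rw [algebraMap_mvPolynomial_eq_coe]
        ext d
        simp [Subsingleton.elim d 0]
      exact hconst ▸ Subalgebra.algebraMap_mem _ _
    refine ⟨fun i ↦ ⟨y i, hy i⟩, fun i ↦ by simp, fun F hF ↦ Subtype.ext ?_⟩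
    rwa [coe_aeval]
  | succ n ih => exact ih.succ

end HenselianSystem

end ArtinApproximation

section TaylorSeries

open Asymptotics Filter MvPowerSeries

lemma eval_smul_of_isHomogeneous {σ R : Type*} [CommSemiring R] {q : MvPolynomial σ R} {d : ℕ}
    (hq : q.IsHomogeneous d) (t : R) (v : σ → R) :
    MvPolynomial.eval (t • v) q = t ^ d * MvPolynomial.eval v q := by
  rw [MvPolynomial.eval_eq, MvPolynomial.eval_eq, Finset.mul_sum]
  refine Finset.sum_congr rfl fun e he ↦ ?_
  have hdeg : ∑ i ∈ e.support, e i = d := by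
    simpa [Finsupp.weight_apply, Finsupp.sum] using hq (MvPolynomial.mem_support_iff.1 he)
  simp only [Pi.smul_apply, smul_eq_mul, mul_pow, Finset.prod_mul_distrib,
    Finset.prod_pow_eq_pow_sum, hdeg]
  ring

variable {σ τ : Type*} [Fintype σ] [Fintype τ]

section PolynomialGrowth

variable {c d : ℕ} {p q : MvPolynomial σ ℝ}

lemma isBigO_norm_pow_of_le {E : Type*} [SeminormedAddCommGroup E] (h : c ≤ d) :
    (fun x : E ↦ ‖x‖ ^ d) =O[𝓝 0] fun x ↦ ‖x‖ ^ c := by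
  refine IsBigO.of_bound 1 ?_
  filter_upwards [Metric.ball_mem_nhds (0 : E) one_pos] with x hx
  simpa using pow_le_pow_of_le_one (norm_nonneg x) (mem_ball_zero_iff.1 hx).le h

lemma isBigO_prod_pow_norm_pow_degree (d : σ →₀ ℕ) :
    (fun x : σ → ℝ ↦ ∏ i ∈ d.support, x i ^ d i) =O[𝓝 0] fun x ↦ ‖x‖ ^ d.degree := by
  simp only [Finsupp.degree_apply, ← Finset.prod_pow_eq_pow_sum]
  refine IsBigO.finsetProd fun i _ ↦ IsBigO.pow (.of_norm_le fun x ↦ ?_) _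
  exact norm_le_pi_norm x i

lemma isBigO_eval_of_mem_orderIdeal (hp : (p : MvPowerSeries σ ℝ) ∈ orderIdeal σ ℝ c) :
    (fun x ↦ MvPolynomial.eval x p) =O[𝓝 0] fun x ↦ ‖x‖ ^ c := by
  simp only [MvPolynomial.eval_eq]
  refine IsBigO.fun_sum fun d hd ↦ IsBigO.const_mul_left ?_ _
  refine (isBigO_prod_pow_norm_pow_degree d).trans (isBigO_norm_pow_of_le ?_)
  by_contra! hdc
  exact MvPolynomial.mem_support_iff.1 hd (by simpa using mem_orderIdeal_iff_coeff.1 hp d hdc)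

lemma eq_zero_of_isHomogeneous_of_isBigO (hq : q.IsHomogeneous d)
    (hO : (fun x ↦ MvPolynomial.eval x q) =O[𝓝 0] fun x ↦ ‖x‖ ^ (d + 1)) : q = 0 := by
  refine MvPolynomial.funext fun v ↦ ?_
  by_contra hv
  have htends : Tendsto (fun t : ℝ ↦ t • v) (𝓝 0) (𝓝 0) :=
    Continuous.tendsto' (by fun_prop) _ _ (zero_smul ℝ v)
  have hray : (fun t : ℝ ↦ MvPolynomial.eval v q * t ^ d) =O[𝓝 0] fun t : ℝ ↦ t ^ (d + 1) := by
    refine ((hO.comp_tendsto htends).congr_left fun t ↦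
      (eval_smul_of_isHomogeneous hq t v).trans (mul_comm _ _)).trans ?_
    refine IsBigO.of_bound (‖v‖ ^ (d + 1)) (Eventually.of_forall fun t ↦ le_of_eq ?_)
    simp [norm_smul, mul_pow, mul_comm]
  have hlittle : (fun t : ℝ ↦ t ^ d) =o[𝓝[≠] 0] fun t ↦ t ^ d :=
    (((isBigO_const_mul_left_iff hv).1 hray).trans_isLittleO
      (isLittleO_pow_pow d.lt_succ_self)).mono nhdsWithin_le_nhds
  refine isLittleO_irrefl (Eventually.frequently ?_) hlittle
  filter_upwards [self_mem_nhdsWithin] with t ht using pow_ne_zero d ht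

lemma mem_orderIdeal_succ_of_isBigO (hp : (p : MvPowerSeries σ ℝ) ∈ orderIdeal σ ℝ d)
    (hO : (fun x ↦ MvPolynomial.eval x p) =O[𝓝 0] fun x ↦ ‖x‖ ^ (d + 1)) :
    (p : MvPowerSeries σ ℝ) ∈ orderIdeal σ ℝ (d + 1) := by
  classical
  set q := MvPolynomial.homogeneousComponent d p with hq
  have hpq : ((p - q : MvPolynomial σ ℝ) : MvPowerSeries σ ℝ) ∈ orderIdeal σ ℝ (d + 1) := by
    refine mem_orderIdeal_iff_coeff.2 fun e he ↦ ?_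
    rw [MvPolynomial.coeff_coe, MvPolynomial.coeff_sub, hq,
      MvPolynomial.coeff_homogeneousComponent]
    split_ifs with hed
    · exact sub_self _
    · have hpe := mem_orderIdeal_iff_coeff.1 hp e (by lia)
      rw [MvPolynomial.coeff_coe] at hpe
      rw [hpe, sub_self]
  have hq0 : q = 0 := eq_zero_of_isHomogeneous_of_isBigO
    (MvPolynomial.homogeneousComponent_isHomogeneous d p)
    (by simpa using hO.sub (isBigO_eval_of_mem_orderIdeal hpq))
  rwa [hq0, sub_zero] at hpq

lemma coe_mem_orderIdeal_of_isBigO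
    (hO : (fun x ↦ MvPolynomial.eval x p) =O[𝓝 0] fun x ↦ ‖x‖ ^ c) :
    (p : MvPowerSeries σ ℝ) ∈ orderIdeal σ ℝ c := by
  induction c with
  | zero => exact mem_orderIdeal.2 (by simp)
  | succ c ih =>
    exact mem_orderIdeal_succ_of_isBigO (ih (hO.trans (isBigO_norm_pow_of_le c.le_succ))) hO

end PolynomialGrowth

/-- `a` is the Taylor series of `y` at `0`: a polynomial agreeing with `a` up to order `c`
approximates `y` up to `O(‖x‖ ^ c)`. No differentiability of `y` is required. -/
def HasTaylorSeries (y : (σ → ℝ) → ℝ) (a : MvPowerSeries σ ℝ) : Prop :=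
  ∀ c : ℕ, ∃ p : MvPolynomial σ ℝ, a - (p : MvPowerSeries σ ℝ) ∈ orderIdeal σ ℝ c ∧
    (fun x ↦ y x - MvPolynomial.eval x p) =O[𝓝 0] fun x ↦ ‖x‖ ^ c

namespace HasTaylorSeries

variable {y z : (σ → ℝ) → ℝ} {a b : MvPowerSeries σ ℝ} {c : ℕ}

lemma isBigO (hy : HasTaylorSeries y a) (ha : a ∈ orderIdeal σ ℝ c) :
    y =O[𝓝 0] fun x ↦ ‖x‖ ^ c := by
  obtain ⟨p, hap, hyp⟩ := hy c
  have hp : (p : MvPowerSeries σ ℝ) ∈ orderIdeal σ ℝ c := by simpa using sub_mem ha hap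
  simpa using hyp.add (isBigO_eval_of_mem_orderIdeal hp)

lemma mem_orderIdeal (hy : HasTaylorSeries y a) (hO : y =O[𝓝 0] fun x ↦ ‖x‖ ^ c) :
    a ∈ orderIdeal σ ℝ c := by
  obtain ⟨p, hap, hyp⟩ := hy c
  have hp : (p : MvPowerSeries σ ℝ) ∈ orderIdeal σ ℝ c :=
    coe_mem_orderIdeal_of_isBigO (by simpa using hO.sub hyp)
  simpa using add_mem hap hp

lemma isBigO_one (hy : HasTaylorSeries y a) : y =O[𝓝 0] fun _ ↦ (1 : ℝ) := by
  simpa using hy.isBigO (c := 0) (_root_.mem_orderIdeal.2 (by simp))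

lemma congr (hy : HasTaylorSeries y a) (h : y =ᶠ[𝓝 0] z) : HasTaylorSeries z a := fun c ↦ by
  obtain ⟨p, hap, hyp⟩ := hy c
  exact ⟨p, hap, hyp.congr' (h.sub .rfl) .rfl⟩

lemma mvPolynomial (p : MvPolynomial σ ℝ) :
    HasTaylorSeries (fun x ↦ MvPolynomial.eval x p) p := fun c ↦
  ⟨p, by simp, by simpa using isBigO_zero _ _⟩

lemma algebraMap_apply (p : MvPolynomial σ ℝ) :
    HasTaylorSeries (fun x ↦ MvPolynomial.eval x p) (algebraMap _ (MvPowerSeries σ ℝ) p) := by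
  simpa only [algebraMap_mvPolynomial_eq_coe] using mvPolynomial p

lemma const (r : ℝ) : HasTaylorSeries (fun _ : σ → ℝ ↦ r) (C r) := by
  simpa using mvPolynomial (σ := σ) (MvPolynomial.C r)

lemma zero : HasTaylorSeries (fun _ : σ → ℝ ↦ 0) 0 := by
  simpa using const (σ := σ) 0

lemma add (hy : HasTaylorSeries y a) (hz : HasTaylorSeries z b) :
    HasTaylorSeries (fun x ↦ y x + z x) (a + b) := fun c ↦ by
  obtain ⟨p, hap, hyp⟩ := hy c
  obtain ⟨q, hbq, hzq⟩ := hz c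
  refine ⟨p + q, ?_, (hyp.add hzq).congr_left fun x ↦ ?_⟩
  · rw [MvPolynomial.coe_add, add_sub_add_comm]
    exact add_mem hap hbq
  · rw [map_add, add_sub_add_comm]

lemma mul (hy : HasTaylorSeries y a) (hz : HasTaylorSeries z b) :
    HasTaylorSeries (fun x ↦ y x * z x) (a * b) := fun c ↦ by
  obtain ⟨p, hap, hyp⟩ := hy c
  obtain ⟨q, hbq, hzq⟩ := hz c
  refine ⟨p * q, ?_, ?_⟩
  · rw [MvPolynomial.coe_mul, show a * b - p * q = b * (a - p) + p * (b - q) by ring]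
    exact add_mem (Ideal.mul_mem_left _ b hap) (Ideal.mul_mem_left _ (p : MvPowerSeries σ ℝ) hbq)
  · have hleft := hyp.mul hz.isBigO_one
    have hright := (mvPolynomial p).isBigO_one.mul hzq
    simp only [mul_one] at hleft
    simp only [one_mul] at hright
    refine (hleft.add hright).congr_left fun x ↦ ?_
    rw [map_mul]
    ring

lemma neg (hy : HasTaylorSeries y a) : HasTaylorSeries (fun x ↦ -y x) (-a) := by
  simpa using (const (-1)).mul hy

lemma sub (hy : HasTaylorSeries y a) (hz : HasTaylorSeries z b) :
    HasTaylorSeries (fun x ↦ y x - z x) (a - b) := by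
  simpa only [sub_eq_add_neg] using hy.add hz.neg

lemma pow (hy : HasTaylorSeries y a) (k : ℕ) : HasTaylorSeries (fun x ↦ y x ^ k) (a ^ k) := by
  induction k with
  | zero => simpa using const (σ := σ) 1
  | succ k ih => simpa only [pow_succ] using ih.mul hy

lemma sum {ι : Type*} {s : Finset ι} {Y : ι → (σ → ℝ) → ℝ} {A : ι → MvPowerSeries σ ℝ}
    (hY : ∀ i ∈ s, HasTaylorSeries (Y i) (A i)) :
    HasTaylorSeries (fun x ↦ ∑ i ∈ s, Y i x) (∑ i ∈ s, A i) := by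
  classical
  induction s using Finset.induction_on with
  | empty => simpa using zero
  | insert i s hi ih =>
    simp only [Finset.sum_insert hi]
    exact (hY i (s.mem_insert_self i)).add (ih fun j hj ↦ hY j (Finset.mem_insert_of_mem hj))

lemma unique (ha : HasTaylorSeries y a) (hb : HasTaylorSeries y b) : a = b := by
  rw [← sub_eq_zero]
  ext d
  refine mem_orderIdeal_iff_coeff.1 ((ha.sub hb).mem_orderIdeal ?_) d d.degree.lt_succ_self
  simpa using isBigO_zero _ _

lemma apply_zero (hy : HasTaylorSeries y a) : y 0 = constantCoeff a := by
  have hO := (hy.sub (const (constantCoeff a))).isBigO (c := 1) (by simp [mem_orderIdeal_one])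
  exact sub_eq_zero.1 (hO.eq_zero_imp.self_of_nhds (by simp))

section Evaluation

variable {R : Type*} [CommSemiring R] {Φ : (σ → ℝ) → R →+* ℝ} {Ψ : R →+* MvPowerSeries σ ℝ}

lemma eval₂ (hΦ : ∀ r, HasTaylorSeries (fun x ↦ Φ x r) (Ψ r)) (hy : HasTaylorSeries y a)
    (q : Polynomial R) : HasTaylorSeries (fun x ↦ q.eval₂ (Φ x) (y x)) (q.eval₂ Ψ a) := by
  induction q using Polynomial.induction_on' with
  | add p q hp hq => simpa only [Polynomial.eval₂_add] using hp.add hq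
  | monomial k r => simpa only [Polynomial.eval₂_monomial] using (hΦ r).mul (hy.pow k)

variable {ι : Type*} {Y : (σ → ℝ) → ι → ℝ} {A : ι → MvPowerSeries σ ℝ}

lemma mvEval₂ (hΦ : ∀ r, HasTaylorSeries (fun x ↦ Φ x r) (Ψ r))
    (hY : ∀ i, HasTaylorSeries (fun x ↦ Y x i) (A i)) (p : MvPolynomial ι R) :
    HasTaylorSeries (fun x ↦ p.eval₂ (Φ x) (Y x)) (p.eval₂ Ψ A) := by
  induction p using MvPolynomial.induction_on with
  | C r => simpa only [MvPolynomial.eval₂_C] using hΦ r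
  | add p q hp hq => simpa only [MvPolynomial.eval₂_add] using hp.add hq
  | mul_X p i hp => simpa only [MvPolynomial.eval₂_mul, MvPolynomial.eval₂_X] using hp.mul (hY i)

end Evaluation

lemma subst {s : σ → MvPolynomial τ ℝ} (hs : HasSubst fun i ↦ (s i : MvPowerSeries τ ℝ))
    (hy : HasTaylorSeries y a) :
    HasTaylorSeries (fun x ↦ y fun i ↦ MvPolynomial.eval x (s i)) (substAlgHom hs a) := fun c ↦ by
  obtain ⟨p, hap, hyp⟩ := hy c
  have hO : (fun x i ↦ MvPolynomial.eval x (s i)) =O[𝓝 0] fun x ↦ ‖x‖ ^ 1 :=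
    isBigO_pi.2 fun i ↦ isBigO_eval_of_mem_orderIdeal
      (mem_orderIdeal_one.2 (hs.const_coeff i).eq_zero)
  have htends : Tendsto (fun x i ↦ MvPolynomial.eval x (s i)) (𝓝 0) (𝓝 0) :=
    hO.trans_tendsto (Continuous.tendsto' (by fun_prop) _ _ (by simp))
  refine ⟨MvPolynomial.aeval s p, ?_, ?_⟩
  · rw [← substAlgHom_coe_eq_coe_aeval hs, ← map_sub]
    exact substAlgHom_mem_orderIdeal hs hap
  · have hpow := hO.norm_left.pow c
    simp only [pow_one] at hpow
    refine ((hyp.comp_tendsto htends).trans hpow).congr_left fun x ↦ ?_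
    exact congr_arg _ (MvPolynomial.eval₂Hom_bind₁ (RingHom.id ℝ) x s p).symm

end HasTaylorSeries

end TaylorSeries

section TaylorTheorem

open Asymptotics Filter MvPowerSeries
open scoped Nat

lemma isBigO_add_sub_sum_iteratedFDeriv {E F : Type*} [NormedAddCommGroup E] [NormedSpace ℝ E]
    [NormedAddCommGroup F] [NormedSpace ℝ F] [CompleteSpace F] {f : E → F} {x : E} {n : ℕ}
    (hf : ContDiffAt ℝ (n + 1) f x) :
    (fun y ↦ f (x + y) - ∑ k ∈ Finset.range (n + 1),
      (k ! : ℝ)⁻¹ • iteratedFDeriv ℝ k f x fun _ ↦ y) =O[𝓝 0] fun y ↦ ‖y‖ ^ (n + 1) := by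
  have hbound : ∀ᶠ z in 𝓝 x, ‖iteratedFDeriv ℝ (n + 1) f z‖ < ‖iteratedFDeriv ℝ (n + 1) f x‖ + 1 :=
    (hf.continuousAt_iteratedFDeriv le_rfl).norm.eventually_lt_const (lt_add_one _)
  obtain ⟨ε, hε, hball⟩ :=
    Metric.eventually_nhds_iff_ball.1 ((hf.eventually (by simp)).and hbound)
  refine IsBigO.of_bound ((n ! : ℝ)⁻¹ * (‖iteratedFDeriv ℝ (n + 1) f x‖ + 1)) ?_
  filter_upwards [Metric.ball_mem_nhds (0 : E) hε] with y hy
  have hsegment (t : ℝ) (ht : t ∈ Set.Icc 0 1) : x + t • y ∈ Metric.ball x ε := by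
    rw [mem_ball_zero_iff] at hy
    rw [mem_ball_iff_norm, add_sub_cancel_left, norm_smul, Real.norm_of_nonneg ht.1]
    exact (mul_le_of_le_one_left (norm_nonneg y) ht.2).trans_lt hy
  rw [map_add_eq_sum_add_integral_iteratedFDeriv fun t ht ↦ (hball _ (hsegment t ht)).1,
    add_sub_cancel_left, norm_smul, Real.norm_of_nonneg (by positivity), mul_assoc]
  gcongr
  refine (intervalIntegral.norm_integral_le_of_norm_le_const fun t ht ↦ ?_).trans_eq
    (by rw [sub_zero, abs_one, mul_one])
  rw [Set.uIoc_of_le zero_le_one] at ht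
  have ht' : 1 - t ∈ Set.Icc 0 1 := ⟨sub_nonneg.2 ht.2, sub_le_self 1 ht.1.le⟩
  calc ‖(1 - t) ^ n • iteratedFDeriv ℝ (n + 1) f (x + t • y) fun _ ↦ y‖
      ≤ 1 * (‖iteratedFDeriv ℝ (n + 1) f (x + t • y)‖ * ‖y‖ ^ (n + 1)) := by
        rw [norm_smul, norm_pow, Real.norm_of_nonneg ht'.1]
        gcongr
        · exact pow_le_one₀ ht'.1 ht'.2
        · simpa using (iteratedFDeriv ℝ (n + 1) f (x + t • y)).le_opNorm fun _ ↦ y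
    _ ≤ (‖iteratedFDeriv ℝ (n + 1) f x‖ + 1) * ‖‖y‖ ^ (n + 1)‖ := by
        rw [one_mul, norm_pow, norm_norm]
        gcongr
        exact (hball _ (hsegment t ⟨ht.1.le, ht.2⟩)).2.le

lemma exists_mvPolynomial_eval_eq_multilinearMap {σ R : Type*} [Finite σ] [CommSemiring R]
    {k : ℕ} (M : MultilinearMap R (fun _ : Fin k ↦ σ → R) R) :
    ∃ p : MvPolynomial σ R, ∀ x, MvPolynomial.eval x p = M fun _ ↦ x := by
  classical
  cases nonempty_fintype σ
  refine ⟨∑ r : Fin k → σ, (∏ i, .X (r i)) * .C (M fun i ↦ Pi.single (r i) 1), fun x ↦ ?_⟩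
  conv_rhs => rw [pi_eq_sum_univ' x, M.map_sum]
  simp [MultilinearMap.map_smul_univ]

variable {σ : Type*} [Fintype σ] {y : (σ → ℝ) → ℝ}

lemma exists_mvPolynomial_isBigO_sub_eval (c : ℕ) (hy : ContDiffAt ℝ c y 0) :
    ∃ p : MvPolynomial σ ℝ, (fun x ↦ y x - MvPolynomial.eval x p) =O[𝓝 0] fun x ↦ ‖x‖ ^ c := by
  obtain _ | n := c
  · exact ⟨0, by simpa using hy.continuousAt.isBigO_one ℝ⟩
  choose p hp using fun k ↦ exists_mvPolynomial_eval_eq_multilinearMap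
    (iteratedFDeriv ℝ k y 0).toMultilinearMap
  refine ⟨∑ k ∈ Finset.range (n + 1), .C (k ! : ℝ)⁻¹ * p k, ?_⟩
  have hO := isBigO_add_sub_sum_iteratedFDeriv (n := n) (by exact_mod_cast hy)
  simpa [hp] using hO

theorem exists_hasTaylorSeries (hy : ContDiffAt ℝ (⊤ : ℕ∞) y 0) : ∃ a, HasTaylorSeries y a := by
  choose p hp using fun c : ℕ ↦ exists_mvPolynomial_isBigO_sub_eval c
    (hy.of_le (by exact_mod_cast le_top))
  have hcoherent {c d : ℕ} (h : c ≤ d) :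
      ((p d - p c : MvPolynomial σ ℝ) : MvPowerSeries σ ℝ) ∈ orderIdeal σ ℝ c := by
    refine coe_mem_orderIdeal_of_isBigO ?_
    refine ((hp c).sub ((hp d).trans (isBigO_norm_pow_of_le h))).congr_left fun x ↦ ?_
    simp
  let a : MvPowerSeries σ ℝ := fun d ↦ (p (d.degree + 1)).coeff d
  refine ⟨a, fun c ↦ ⟨p c, ?_, hp c⟩⟩
  refine mem_orderIdeal_iff_coeff.2 fun d hd ↦ ?_
  have hcoeff := mem_orderIdeal_iff_coeff.1 (hcoherent hd) d d.degree.lt_succ_self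
  rw [MvPolynomial.coeff_coe, MvPolynomial.coeff_sub, sub_eq_zero] at hcoeff
  rw [map_sub, MvPolynomial.coeff_coe, hcoeff]
  exact sub_self _

lemma eventually_eq_zero_of_forall_isBigO {E F : Type*} [NormedAddCommGroup E] [NormedSpace ℝ E]
    [NormedAddCommGroup F] [NormedSpace ℝ F] {f : E → F} (hf : AnalyticAt ℝ f 0)
    (hflat : ∀ c : ℕ, f =O[𝓝 0] fun x ↦ ‖x‖ ^ c) : ∀ᶠ x in 𝓝 0, f x = 0 := by
  obtain ⟨P, hP⟩ := hf
  have hzero (k : ℕ) (v : E) : (P k fun _ ↦ v) = 0 := by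
    induction k using Nat.strong_induction_on generalizing v with
    | _ k ih =>
      have hsum : P.partialSum (k + 1) = fun z ↦ P k fun _ ↦ z := by
        funext z
        rw [FormalMultilinearSeries.partialSum, Finset.sum_range_succ,
          Finset.sum_eq_zero fun b hb ↦ ih b (Finset.mem_range.1 hb) z, zero_add]
      have hrem := hP.isBigO_sub_partialSum_pow (k + 1)
      simp only [zero_add, hsum] at hrem
      exact IsBigO.continuousMultilinearMap_apply_eq_zero
        (by simpa using (hflat (k + 1)).sub hrem) v
  filter_upwards [hP.eventually_hasSum_sub] with x hx
  simp only [hzero] at hx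
  exact hx.unique hasSum_zero

lemma HasTaylorSeries.eventually_eq {z : (σ → ℝ) → ℝ} {a : MvPowerSeries σ ℝ}
    (hy : HasTaylorSeries y a) (hz : HasTaylorSeries z a) (hya : AnalyticAt ℝ y 0)
    (hza : AnalyticAt ℝ z 0) : y =ᶠ[𝓝 0] z := by
  have hsub := hy.sub hz
  rw [sub_self] at hsub
  filter_upwards [eventually_eq_zero_of_forall_isBigO (hya.fun_sub hza)
    fun c ↦ hsub.isBigO (zero_mem _)] with x hx using sub_eq_zero.1 hx

end TaylorTheorem

section NashSeries

open MvPowerSeries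
open scoped ContDiff

lemma exists_analyticAt_implicit {E : Type*} [NormedAddCommGroup E] [NormedSpace ℝ E]
    [CompleteSpace E] {F : E × ℝ → ℝ} {x₀ : E} {t₀ F' : ℝ} (hF : AnalyticAt ℝ F (x₀, t₀))
    (hF0 : F (x₀, t₀) = 0) (hF' : HasDerivAt (fun t ↦ F (x₀, t)) F' t₀) (hne : F' ≠ 0) :
    ∃ u : E → ℝ, AnalyticAt ℝ u x₀ ∧ u x₀ = t₀ ∧ ∀ᶠ x in 𝓝 x₀, F (x, u x) = 0 := by
  have hsmooth : ContDiffAt ℝ ω F (x₀, t₀) := hF.contDiffAt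
  have hpartial : (fderiv ℝ F (x₀, t₀) ∘L .inr ℝ E ℝ) 1 = F' :=
    (hF.differentiableAt.hasFDerivAt.comp_hasDerivAt t₀
      ((hasDerivAt_const t₀ x₀).prodMk (hasDerivAt_id t₀))).unique hF'
  have hinv : (fderiv ℝ F (x₀, t₀) ∘L .inr ℝ E ℝ).IsInvertible := by
    refine ⟨ContinuousLinearEquiv.unitsEquivAut ℝ (Units.mk0 F' hne), ?_⟩
    ext
    rw [hpartial]
    simp
  have hω : (ω : WithTop ℕ∞) ≠ 0 := by simp
  refine ⟨hsmooth.implicitFunction hω hinv, ?_, ?_, ?_⟩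
  · exact (hsmooth.contDiffAt_implicitFunction hω hinv).analyticAt
  · exact hsmooth.implicitFunction_apply_self hω hinv
  · simpa only [hF0] using hsmooth.eventually_apply_implicitFunction hω hinv

section ConvergentRoot

variable {σ : Type*} [Fintype σ]

lemma exists_analyticAt_hasTaylorSeries_root {R : Type*} [CommRing R] {Ψ : R →+* MvPowerSeries σ ℝ}
    (hΨ : ∀ r, ∃ y, AnalyticAt ℝ y 0 ∧ HasTaylorSeries y (Ψ r)) (p : Polynomial R) {t₀ : ℝ}
    (hroot : p.eval₂ (constantCoeff.comp Ψ) t₀ = 0)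
    (hsimple : p.derivative.eval₂ (constantCoeff.comp Ψ) t₀ ≠ 0) :
    ∃ u a, AnalyticAt ℝ u 0 ∧ HasTaylorSeries u a ∧ constantCoeff a = t₀ ∧ p.eval₂ Ψ a = 0 := by
  choose y hya hy using hΨ
  let F : (σ → ℝ) × ℝ → ℝ := fun v ↦ p.sum fun i r ↦ y r v.1 * v.2 ^ i
  have hFa : AnalyticAt ℝ F (0, t₀) :=
    Finset.analyticAt_fun_sum _ fun i _ ↦ (AnalyticAt.fun_comp (f := Prod.fst) (x := (0, t₀))
      (hya (p.coeff i)) analyticAt_fst).fun_mul (analyticAt_snd.pow i)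
  have hF_zero (t : ℝ) : F (0, t) = (p.map (constantCoeff.comp Ψ)).eval t := by
    simp [F, Polynomial.eval_map, Polynomial.eval₂_eq_sum, fun r ↦ (hy r).apply_zero]
  have hF' := (p.map (constantCoeff.comp Ψ)).hasDerivAt t₀
  simp only [← hF_zero, Polynomial.derivative_map, Polynomial.eval_map] at hF'
  obtain ⟨u, hua, hu0, hu⟩ := exists_analyticAt_implicit hFa
    (by rw [hF_zero, Polynomial.eval_map, hroot]) hF' hsimple
  obtain ⟨a, ha⟩ := exists_hasTaylorSeries hua.contDiffAt
  refine ⟨u, a, hua, ha, by rw [← ha.apply_zero, hu0], ?_⟩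
  have hseries : HasTaylorSeries (fun x ↦ F (x, u x)) (p.eval₂ Ψ a) := by
    rw [Polynomial.eval₂_eq_sum]
    exact HasTaylorSeries.sum fun i _ ↦ (hy _).mul (ha.pow i)
  exact (hseries.congr hu).unique .zero

end ConvergentRoot

/-- The algebra of Nash power series: Taylor series of analytic germs that are algebraic over the
polynomials. -/
def nashSeries (n : ℕ) : Subalgebra (MvPolynomial (Fin n) ℝ) (MvPowerSeries (Fin n) ℝ) where
  carrier := {a | (∃ y, AnalyticAt ℝ y 0 ∧ HasTaylorSeries y a) ∧
    IsAlgebraic (MvPolynomial (Fin n) ℝ) a}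
  mul_mem' := by
    rintro a b ⟨⟨y, hya, hy⟩, ha⟩ ⟨⟨z, hza, hz⟩, hb⟩
    exact ⟨⟨_, hya.fun_mul hza, hy.mul hz⟩, ha.mul hb⟩
  add_mem' := by
    rintro a b ⟨⟨y, hya, hy⟩, ha⟩ ⟨⟨z, hza, hz⟩, hb⟩
    exact ⟨⟨_, hya.fun_add hza, hy.add hz⟩, ha.add hb⟩
  algebraMap_mem' p :=
     ⟨⟨_, AnalyticOnNhd.eval_mvPolynomial p 0 trivial, .algebraMap_apply p⟩,
      isAlgebraic_algebraMap p⟩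

variable {m n : ℕ}

lemma substAlgHom_mem_nashSeries {s : Fin m → MvPolynomial (Fin n) ℝ}
    (hs : HasSubst fun i ↦ (s i : MvPowerSeries (Fin n) ℝ)) (hind : AlgebraicIndependent ℝ s)
    {a : MvPowerSeries (Fin m) ℝ} (ha : a ∈ nashSeries m) : substAlgHom hs a ∈ nashSeries n := by
  obtain ⟨⟨y, hya, hy⟩, halg⟩ := ha
  refine ⟨⟨_, ?_, hy.subst hs⟩, ?_⟩
  · have hs0 : (fun i ↦ MvPolynomial.eval 0 (s i)) = 0 := funext fun i ↦
      (HasTaylorSeries.mvPolynomial (s i)).apply_zero.trans (hs.const_coeff i).eq_zero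
    exact AnalyticAt.fun_comp (by rwa [hs0]) (analyticAt_pi_iff.2 fun i ↦
      AnalyticOnNhd.eval_mvPolynomial (s i) 0 trivial)
  · refine halg.ringHom_of_comp_eq (MvPolynomial.aeval s) (substAlgHom hs) hind ?_
    refine RingHom.ext fun p ↦ ?_
    simpa [algebraMap_mvPolynomial_eq_coe] using (substAlgHom_coe_eq_coe_aeval hs p).symm

lemma nashSeries.exists_root (p : Polynomial (nashSeries n)) {a₀ : nashSeries n}
    (hroot : constantCoeff ((p.eval a₀ : nashSeries n) : MvPowerSeries (Fin n) ℝ) = 0)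
    (hsimple :
      constantCoeff ((p.derivative.eval a₀ : nashSeries n) : MvPowerSeries (Fin n) ℝ) ≠ 0) :
    ∃ a : nashSeries n, p.IsRoot a ∧
      constantCoeff (a - a₀ : MvPowerSeries (Fin n) ℝ) = 0 := by
  let Ψ : nashSeries n →+* MvPowerSeries (Fin n) ℝ := (nashSeries n).val
  have heval (q : Polynomial (nashSeries n)) :
      q.eval₂ (constantCoeff.comp Ψ) (constantCoeff (Ψ a₀)) = constantCoeff (Ψ (q.eval a₀)) :=
    (Polynomial.hom_eval₂ q (RingHom.id _) (constantCoeff.comp Ψ) a₀).symm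
  obtain ⟨u, a, hua, hu, ha0, ha⟩ := exists_analyticAt_hasTaylorSeries_root
    (Ψ := Ψ) (fun r ↦ r.2.1) p ((heval p).trans hroot) (by rwa [heval])
  have hp : p ≠ 0 := by
    rintro rfl
    simp at hsimple
  have : Algebra.IsAlgebraic (MvPolynomial (Fin n) ℝ) (nashSeries n) :=
    (nashSeries n).isAlgebraic_iff.1 fun b hb ↦ hb.2
  have halg : IsAlgebraic (nashSeries n) a := ⟨p, hp, ha⟩
  refine ⟨⟨a, ⟨u, hua, hu⟩, halg.restrictScalars _⟩, ?_, by rw [map_sub, ha0]; exact sub_self _⟩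
  refine Subtype.ext ?_
  exact (Polynomial.hom_eval₂ p (RingHom.id _) Ψ _).trans ha

lemma nashSeries.isUnit_of_constantCoeff_ne_zero {b : nashSeries n}
    (hb : constantCoeff (b : MvPowerSeries (Fin n) ℝ) ≠ 0) : IsUnit b := by
  let a₀ : nashSeries n := algebraMap (MvPolynomial (Fin n) ℝ) _
    (MvPolynomial.C (constantCoeff (b : MvPowerSeries (Fin n) ℝ))⁻¹)
  have ha₀ : constantCoeff (a₀ : MvPowerSeries (Fin n) ℝ) =
      (constantCoeff (b : MvPowerSeries (Fin n) ℝ))⁻¹ := by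
    simp [a₀, algebraMap_mvPolynomial_eq_coe]
  obtain ⟨a, ha, -⟩ := nashSeries.exists_root (.C b * .X - 1) (a₀ := a₀)
    (by simp [ha₀, hb]) (by simpa using hb)
  refine .of_mul_eq_one a ?_
  simpa [sub_eq_zero] using ha

/-- The Nash power series as a Henselian system. -/
def nashHenselianSystem : HenselianSystem ℝ where
  ring := nashSeries
  subst_mem := substAlgHom_mem_nashSeries
  henselianRing n :=
    { jac := fun b hb ↦ Ideal.mem_jacobson_bot.2 fun c ↦ by
        have hb0 : constantCoeff (b : MvPowerSeries (Fin n) ℝ) = 0 := mem_orderIdeal_one.1 hb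
        exact nashSeries.isUnit_of_constantCoeff_ne_zero (by simp [hb0])
      is_henselian := fun p _ a₀ hroot hsimple ↦ by
        obtain ⟨a, ha, haa₀⟩ := nashSeries.exists_root p (mem_orderIdeal_one.1 hroot) fun h ↦ by
          have hmem : p.derivative.eval a₀ ∈ (orderIdeal (Fin n) ℝ 1).comap (nashSeries n).val :=
            mem_orderIdeal_one.2 h
          rw [Ideal.Quotient.eq_zero_iff_mem.2 hmem, isUnit_zero_iff] at hsimple
          have hone := Ideal.Quotient.eq_zero_iff_mem.1 hsimple.symm
          simp [mem_orderIdeal_one] at hone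
        exact ⟨a, ha, mem_orderIdeal_one.2 haa₀⟩ }

end NashSeries

section SimpleRoots

open Asymptotics Filter MvPowerSeries

lemma eq_of_eval_eq_zero_of_sub_mem {A : Type*} [CommRing A] [NoZeroDivisors A] {I : Ideal A}
    {p : Polynomial A} {a b : A} (ha : p.eval a = 0) (hb : p.eval b = 0) (hab : b - a ∈ I)
    (hsimple : p.derivative.eval a ∉ I) : a = b := by
  obtain ⟨k, hk⟩ := p.binomExpansion a (b - a)
  rw [add_sub_cancel, ha, hb] at hk
  have hprod : (b - a) * (p.derivative.eval a + k * (b - a)) = 0 := by linear_combination -hk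
  rcases mul_eq_zero.1 hprod with h | h
  · exact (sub_eq_zero.1 h).symm
  · refine absurd ?_ hsimple
    rw [eq_neg_of_add_eq_zero_left h]
    exact neg_mem (I.mul_mem_left _ hab)

lemma exists_aeval_eq_zero_aeval_derivative_ne_zero {R A : Type*} [CommRing R]
    [IsAddTorsionFree R] [Ring A] [Algebra R A] [FaithfulSMul R A] {a : A}
    (ha : IsAlgebraic R a) :
    ∃ q : Polynomial R, Polynomial.aeval a q = 0 ∧ Polynomial.aeval a q.derivative ≠ 0 := by
  obtain ⟨q, hq, hqa⟩ := ha
  induction hd : q.natDegree using Nat.strong_induction_on generalizing q with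
  | _ d ih =>
    by_cases hq' : Polynomial.aeval a q.derivative = 0
    · have hdeg : q.natDegree ≠ 0 := fun h ↦ by
        rw [Polynomial.eq_C_of_natDegree_eq_zero h, Polynomial.aeval_C,
          FaithfulSMul.algebraMap_eq_zero_iff] at hqa
        rw [Polynomial.eq_C_of_natDegree_eq_zero h, hqa, map_zero] at hq
        exact hq rfl
      exact ih _ (hd ▸ Polynomial.natDegree_derivative_lt hdeg) _
        (fun h ↦ hdeg (Polynomial.derivative_eq_zero.1 h)) hq' rfl
    · exact ⟨q, hqa, hq'⟩

lemma analyticAt_eval₂ {E R : Type*} [NormedAddCommGroup E] [NormedSpace ℝ E] [CommSemiring R]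
    {Φ : E → R →+* ℝ} {x₀ : E} (hΦ : ∀ r, AnalyticAt ℝ (fun x ↦ Φ x r) x₀) {y : E → ℝ}
    (hy : AnalyticAt ℝ y x₀) (q : Polynomial R) :
    AnalyticAt ℝ (fun x ↦ q.eval₂ (Φ x) (y x)) x₀ := by
  simp only [Polynomial.eval₂_eq_sum]
  exact Finset.analyticAt_fun_sum _ fun i _ ↦ (hΦ _).fun_mul (hy.fun_pow i)

lemma analyticAt_mvEval₂ {E R ι : Type*} [NormedAddCommGroup E] [NormedSpace ℝ E]
    [CommSemiring R] {Φ : E → R →+* ℝ} {x₀ : E} (hΦ : ∀ r, AnalyticAt ℝ (fun x ↦ Φ x r) x₀)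
    {Y : E → ι → ℝ} (hY : ∀ i, AnalyticAt ℝ (fun x ↦ Y x i) x₀) (p : MvPolynomial ι R) :
    AnalyticAt ℝ (fun x ↦ p.eval₂ (Φ x) (Y x)) x₀ := by
  simp only [MvPolynomial.eval₂_eq]
  exact Finset.analyticAt_fun_sum _ fun d _ ↦ (hΦ _).fun_mul <|
    Finset.analyticAt_fun_prod _ fun i _ ↦ (hY i).fun_pow _

variable {σ : Type*} [Fintype σ] {y z : (σ → ℝ) → ℝ} {c : ℕ}

lemma HasTaylorSeries.eventually_eq_zero_iff {a : MvPowerSeries σ ℝ} (hy : HasTaylorSeries y a)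
    (hya : AnalyticAt ℝ y 0) : (∀ᶠ x in 𝓝 0, y x = 0) ↔ a = 0 :=
  ⟨fun h ↦ (hy.congr h).unique .zero, fun h ↦
    hy.eventually_eq (h ▸ .zero) hya analyticAt_const⟩

lemma HasTaylorSeries.aeval_polynomial {a : MvPowerSeries σ ℝ} (hy : HasTaylorSeries y a)
    (q : Polynomial (MvPolynomial σ ℝ)) :
    HasTaylorSeries (fun x ↦ q.eval₂ (MvPolynomial.eval x) (y x)) (Polynomial.aeval a q) :=
  eval₂ algebraMap_apply hy q

/-- `y` solves `q(x, y) = 0` near `0`, and the partial derivative of `q` along the solution does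
not vanish to order `c`: the solution is simple to within precision `c`. The map `φ` allows the
coefficients of `q` to be evaluated along `φ x` instead of `x`. -/
def IsSimpleRoot {ι : Type*} (φ : (σ → ℝ) → ι → ℝ) (q : Polynomial (MvPolynomial ι ℝ)) (c : ℕ)
    (y : (σ → ℝ) → ℝ) : Prop :=
  (∀ᶠ x in 𝓝 0, q.eval₂ (MvPolynomial.eval (φ x)) (y x) = 0) ∧
    ¬(fun x ↦ q.derivative.eval₂ (MvPolynomial.eval (φ x)) (y x)) =O[𝓝 0] fun x ↦ ‖x‖ ^ c

lemma IsSimpleRoot.eventually_eq {ι : Type*} {φ : (σ → ℝ) → ι → ℝ}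
    {q : Polynomial (MvPolynomial ι ℝ)} (hroot : IsSimpleRoot φ q c y)
    (hφ : ∀ i, ContDiffAt ℝ (⊤ : ℕ∞) (fun x ↦ φ x i) 0)
    (hy : AnalyticAt ℝ y 0) (hz : AnalyticAt ℝ z 0)
    (hqz : ∀ᶠ x in 𝓝 0, q.eval₂ (MvPolynomial.eval (φ x)) (z x) = 0)
    (hyz : (fun x ↦ z x - y x) =O[𝓝 0] fun x ↦ ‖x‖ ^ c) : y =ᶠ[𝓝 0] z := by
  choose T hT using fun i ↦ exists_hasTaylorSeries (hφ i)
  obtain ⟨a, ha⟩ := exists_hasTaylorSeries hy.contDiffAt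
  obtain ⟨b, hb⟩ := exists_hasTaylorSeries hz.contDiffAt
  let Ψ : MvPolynomial ι ℝ →+* MvPowerSeries σ ℝ := MvPolynomial.eval₂Hom C T
  have hΨ (p) : HasTaylorSeries (fun x ↦ MvPolynomial.eval (φ x) p) (Ψ p) :=
    HasTaylorSeries.mvEval₂ (Φ := fun _ ↦ RingHom.id ℝ) HasTaylorSeries.const hT p
  have hab : a = b := by
    refine eq_of_eval_eq_zero_of_sub_mem (I := orderIdeal σ ℝ c) (p := q.map Ψ) ?_ ?_ ?_ ?_
    · rw [Polynomial.eval_map]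
      exact ((HasTaylorSeries.eval₂ hΨ ha q).congr hroot.1).unique .zero
    · rw [Polynomial.eval_map]
      exact ((HasTaylorSeries.eval₂ hΨ hb q).congr hqz).unique .zero
    · exact (hb.sub ha).mem_orderIdeal hyz
    · rw [Polynomial.derivative_map, Polynomial.eval_map]
      exact fun h ↦ hroot.2 ((HasTaylorSeries.eval₂ hΨ ha q.derivative).isBigO h)
  exact ha.eventually_eq (hab ▸ hb) hy hz

lemma exists_eventually_isSimpleRoot {a : MvPowerSeries σ ℝ} (hya : AnalyticAt ℝ y 0)
    (hy : HasTaylorSeries y a) (halg : IsAlgebraic (MvPolynomial σ ℝ) a) :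
    ∃ q, ∀ᶠ c in atTop, IsSimpleRoot id q c y := by
  have : FaithfulSMul (MvPolynomial σ ℝ) (MvPowerSeries σ ℝ) :=
    (faithfulSMul_iff_algebraMap_injective _ _).2 algebraMap_mvPolynomial_injective
  obtain ⟨q, hq, hq'⟩ := exists_aeval_eq_zero_aeval_derivative_ne_zero halg
  have hroot := ((hy.aeval_polynomial q).eventually_eq_zero_iff
    (analyticAt_eval₂ (fun p ↦ AnalyticOnNhd.eval_mvPolynomial p 0 trivial) hya q)).2 hq
  obtain ⟨d, hd⟩ := ne_zero_iff_exists_coeff_ne_zero _ |>.1 hq'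
  refine ⟨q, (eventually_gt_atTop d.degree).mono fun c hc ↦ ⟨hroot, fun hO ↦ hd ?_⟩⟩
  exact mem_orderIdeal_iff_coeff.1 ((hy.aeval_polynomial _).mem_orderIdeal hO) d hc

end SimpleRoots

section NashGerms

open Asymptotics Filter MvPowerSeries

/-- Polynomials in `n + 1` variables as univariate polynomials in the last variable. -/
noncomputable def snocEquiv (R : Type*) [CommRing R] (n : ℕ) :
    MvPolynomial (Fin (n + 1)) R ≃ₐ[R] Polynomial (MvPolynomial (Fin n) R) :=
  (MvPolynomial.renameEquiv R (finRotate (n + 1))).trans (MvPolynomial.finSuccEquiv R n)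

lemma eval₂_snocEquiv {R : Type*} [CommRing R] {n : ℕ} (x : Fin n → R) (t : R)
    (P : MvPolynomial (Fin (n + 1)) R) :
    (snocEquiv R n P).eval₂ (MvPolynomial.eval x) t =
      MvPolynomial.eval (Fin.snoc x t : Fin (n + 1) → R) P := by
  rw [snocEquiv, AlgEquiv.trans_apply, ← Polynomial.eval_map, ← MvPolynomial.eval_eq_eval_mv_eval',
    MvPolynomial.renameEquiv_apply, MvPolynomial.eval_rename, Fin.snoc_eq_cons_rotate]
  rfl

variable {n m : ℕ} {f : (Fin n → ℝ) → (Fin m → ℝ)}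

lemma HasTaylorSeries.isAlgebraic_iff {y : (Fin n → ℝ) → ℝ} {a : MvPowerSeries (Fin n) ℝ}
    (hy : HasTaylorSeries y a) (hya : AnalyticAt ℝ y 0) :
    IsAlgebraic (MvPolynomial (Fin n) ℝ) a ↔ ∃ P : MvPolynomial (Fin (n + 1)) ℝ, P ≠ 0 ∧
      ∀ᶠ x in 𝓝 0, MvPolynomial.eval (Fin.snoc x (y x) : Fin (n + 1) → ℝ) P = 0 := by
  refine (snocEquiv ℝ n).symm.toEquiv.exists_congr fun q ↦ and_congr (by simp) ?_
  rw [← (hy.aeval_polynomial q).eventually_eq_zero_iff (analyticAt_eval₂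
    (fun p ↦ AnalyticOnNhd.eval_mvPolynomial p 0 trivial) hya q)]
  simp [← eval₂_snocEquiv]

lemma NashGerm.analyticAt_apply (hf : NashGerm f) (j : Fin m) :
    AnalyticAt ℝ (fun x ↦ f x j) 0 :=
  analyticAt_pi_iff.1 hf.1 j

lemma NashGerm.exists_eventually_isSimpleRoot (hf : NashGerm f) :
    ∃ q : Fin m → Polynomial (MvPolynomial (Fin n) ℝ),
      ∀ᶠ c in atTop, ∀ j, IsSimpleRoot id (q j) c fun x ↦ f x j := by
  choose a ha using fun j ↦ exists_hasTaylorSeries (hf.analyticAt_apply j).contDiffAt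
  choose q hq using fun j ↦ _root_.exists_eventually_isSimpleRoot (hf.analyticAt_apply j) (ha j)
    (((ha j).isAlgebraic_iff (hf.analyticAt_apply j)).2 (hf.2.2 j))
  exact ⟨q, eventually_all.2 hq⟩

theorem exists_nashGerm_approximation {N : ℕ} {Y : (Fin n → ℝ) → Fin N → ℝ}
    (hY : ContDiffAt ℝ (⊤ : ℕ∞) Y 0) (hY0 : Y 0 = 0) {c : ℕ} (hc : c ≠ 0) :
    ∃ Z : (Fin n → ℝ) → Fin N → ℝ, NashGerm Z ∧
      (fun x ↦ Z x - Y x) =O[𝓝 0] (fun x ↦ ‖x‖ ^ c) ∧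
      ∀ F : MvPolynomial (Fin N) (MvPolynomial (Fin n) ℝ),
        (∀ᶠ x in 𝓝 0, F.eval₂ (MvPolynomial.eval x) (Y x) = 0) →
        ∀ᶠ x in 𝓝 0, F.eval₂ (MvPolynomial.eval x) (Z x) = 0 := by
  choose A hA using fun i ↦ exists_hasTaylorSeries (contDiffAt_pi.1 hY i)
  obtain ⟨B, hBA, hker⟩ := nashHenselianSystem.hasApproximation n N A c
  choose Z hZa hZ using fun i ↦ (B i).2.1
  have hclose : (fun x ↦ (Z · x) - Y x) =O[𝓝 0] fun x ↦ ‖x‖ ^ c :=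
    isBigO_pi.2 fun i ↦ ((hZ i).sub (hA i)).isBigO (hBA i)
  have hZ0 := hclose.eq_zero_imp.self_of_nhds (by simp [hc])
  refine ⟨fun x i ↦ Z i x, ⟨analyticAt_pi_iff.2 hZa, ?_, fun i ↦ ?_⟩, hclose, fun F hF ↦ ?_⟩
  · rwa [hY0, sub_zero] at hZ0
  · exact ((hZ i).isAlgebraic_iff (hZa i)).1 (B i).2.2
  · have hFA : MvPolynomial.aeval A F = 0 :=
      ((HasTaylorSeries.mvEval₂ .algebraMap_apply hA F).congr hF).unique .zero
    have hFB := congrArg Subtype.val (hker hFA)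
    rw [HenselianSystem.coe_aeval] at hFB
    exact ((HasTaylorSeries.mvEval₂ .algebraMap_apply hZ F).eventually_eq_zero_iff
      (analyticAt_mvEval₂ (fun p ↦ AnalyticOnNhd.eval_mvPolynomial p 0 trivial) hZa F)).2 hFB

lemma NashGerm.comp_index {k : ℕ} (hf : NashGerm f) (e : Fin k → Fin m) :
    NashGerm fun x i ↦ f x (e i) :=
  ⟨analyticAt_pi_iff.2 fun i ↦ hf.analyticAt_apply (e i), by simp only [hf.2.1]; rfl,
    fun i ↦ hf.2.2 (e i)⟩

/-- The polynomial `q(s, Xᵢ)`, obtained from `q(w, t)` by substituting polynomials `s` for `w` and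
the variable `Xᵢ` for `t`. -/
noncomputable def substPolynomial {R ι κ μ : Type*} [CommRing R] (q : Polynomial (MvPolynomial κ R))
    (s : κ → MvPolynomial ι (MvPolynomial μ R)) (i : ι) : MvPolynomial ι (MvPolynomial μ R) :=
  q.eval₂ (MvPolynomial.aeval s).toRingHom (.X i)

lemma eval₂_substPolynomial {R ι κ μ : Type*} [CommRing R] (q : Polynomial (MvPolynomial κ R))
    (s : κ → MvPolynomial ι (MvPolynomial μ R)) (i : ι) (x : μ → R) (v : ι → R) :
    (substPolynomial q s i).eval₂ (MvPolynomial.eval x) v =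
      q.eval₂ (MvPolynomial.eval fun a ↦ (s a).eval₂ (MvPolynomial.eval x) v) (v i) := by
  have hcomp : (MvPolynomial.eval₂Hom (MvPolynomial.eval x) v).comp (MvPolynomial.aeval s).toRingHom
      = MvPolynomial.eval fun a ↦ (s a).eval₂ (MvPolynomial.eval x) v := by
    ext <;> simp [MvPolynomial.algebraMap_apply]
  refine (q.hom_eval₂ _ (MvPolynomial.eval₂Hom (MvPolynomial.eval x) v) _).trans ?_
  rw [hcomp, MvPolynomial.eval₂Hom_X']

lemma exists_nashGerm_approximation_pair {k : ℕ} {τ : (Fin n → ℝ) → Fin k → ℝ}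
    {g : (Fin n → ℝ) → Fin m → ℝ} (hτ : ContDiffAt ℝ (⊤ : ℕ∞) τ 0) (hτ0 : τ 0 = 0)
    (hg : ContDiffAt ℝ (⊤ : ℕ∞) g 0) (hg0 : g 0 = 0) {c : ℕ} (hc : c ≠ 0) :
    ∃ φ h, NashGerm φ ∧ NashGerm h ∧ (fun x ↦ φ x - τ x) =O[𝓝 0] (fun x ↦ ‖x‖ ^ c) ∧
      (fun x ↦ h x - g x) =O[𝓝 0] (fun x ↦ ‖x‖ ^ c) ∧
      (∀ j (q : Polynomial (MvPolynomial (Fin k) ℝ)),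
        (∀ᶠ x in 𝓝 0, q.eval₂ (MvPolynomial.eval (τ x)) (g x j) = 0) →
        ∀ᶠ x in 𝓝 0, q.eval₂ (MvPolynomial.eval (φ x)) (h x j) = 0) ∧
      ∀ j (r : Polynomial (MvPolynomial (Fin n) ℝ)),
        (∀ᶠ x in 𝓝 0, r.eval₂ (MvPolynomial.eval x) (g x j) = 0) →
        ∀ᶠ x in 𝓝 0, r.eval₂ (MvPolynomial.eval x) (h x j) = 0 := by
  have hY : ContDiffAt ℝ (⊤ : ℕ∞) (fun x ↦ Fin.append (τ x) (g x)) 0 :=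
    contDiffAt_pi.2 <| Fin.addCases (fun i ↦ by simpa using contDiffAt_pi.1 hτ i)
      fun j ↦ by simpa using contDiffAt_pi.1 hg j
  have hY0 : Fin.append (τ 0) (g 0) = 0 :=
    funext <| Fin.addCases (fun i ↦ by simp [hτ0]) fun j ↦ by simp [hg0]
  obtain ⟨Z, hZ, hclose, hsol⟩ := exists_nashGerm_approximation hY hY0 hc
  refine ⟨_, _, hZ.comp_index (Fin.castAdd m), hZ.comp_index (Fin.natAdd k), ?_, ?_,
    fun j q hq ↦ ?_, fun j r hr ↦ ?_⟩
  · exact isBigO_pi.2 fun i ↦ by simpa using isBigO_pi.1 hclose (Fin.castAdd m i)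
  · exact isBigO_pi.2 fun j ↦ by simpa using isBigO_pi.1 hclose (Fin.natAdd k j)
  · simpa [eval₂_substPolynomial] using
      hsol (substPolynomial q (fun i ↦ .X (Fin.castAdd m i)) (Fin.natAdd k j))
        (by simpa [eval₂_substPolynomial] using hq)
  · simpa [eval₂_substPolynomial] using
      hsol (substPolynomial r (fun i ↦ .C (.X i)) (Fin.natAdd k j))
        (by simpa [eval₂_substPolynomial] using hr)

end NashGerms

section FirstOrder

open Asymptotics Filter

variable {E F G : Type*} [NormedAddCommGroup E] [NormedSpace ℝ E] [NormedAddCommGroup F]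
  [NormedSpace ℝ F] [NormedAddCommGroup G] {φ τ : E → F}

lemma hasFDerivAt_of_isBigO_sub {τ' : E →L[ℝ] F} (hτ : HasFDerivAt τ τ' 0) {c : ℕ} (hc : 1 < c)
    (hφτ : (fun x ↦ φ x - τ x) =O[𝓝 0] fun x ↦ ‖x‖ ^ c) : HasFDerivAt φ τ' 0 := by
  have hsub : HasFDerivAt (fun x ↦ φ x - τ x) (0 : E →L[ℝ] F) 0 :=
    IsBigO.hasFDerivAt (by simpa using hφτ) hc
  simpa using hsub.fun_add hτ

lemma isBigO_comp_sub_comp [NormedSpace ℝ G] {f : F → G} {f' : F →L[ℝ] G} {y₀ : F} {α : Type*}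
    {l : Filter α} {u v : α → F} (hf : HasStrictFDerivAt f f' y₀) (hu : Tendsto u l (𝓝 y₀))
    (hv : Tendsto v l (𝓝 y₀)) : (fun x ↦ f (u x) - f (v x)) =O[l] fun x ↦ u x - v x :=
  hf.isBigO_sub.comp_tendsto (hu.prodMk_nhds hv)

lemma isBigO_of_isBigO_comp [CompleteSpace E] {D : E ≃L[ℝ] F}
    (hφ : HasStrictFDerivAt φ (D : E →L[ℝ] F) 0) (hφ0 : φ 0 = 0) {d : F → G} {c : ℕ}
    (hd : (fun x ↦ d (φ x)) =O[𝓝 0] fun x ↦ ‖x‖ ^ c) : d =O[𝓝 0] fun x ↦ ‖x‖ ^ c := by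
  have hψ := hφ.to_localInverse
  have hright := hφ.eventually_right_inverse
  have hψ0 := hφ.localInverse_apply_image
  rw [hφ0] at hψ hright hψ0
  set ψ := hφ.localInverse φ D 0
  have hψO : ψ =O[𝓝 0] fun x ↦ x := by simpa [hψ0] using hψ.hasFDerivAt.isBigO_sub
  have hψt : Tendsto ψ (𝓝 0) (𝓝 0) := hψ0 ▸ hψ.hasFDerivAt.continuousAt.tendsto
  refine ((hd.comp_tendsto hψt).trans (hψO.norm_norm.pow c)).congr' ?_ .rfl
  filter_upwards [hright] with x hx
  simp only [Function.comp_apply, hx]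

end FirstOrder

section Rectification

open Asymptotics Filter

variable {n m c : ℕ}

lemma IsSimpleRoot.comp {σ : Type*} [Fintype σ] {y : (σ → ℝ) → ℝ}
    {q : Polynomial (MvPolynomial σ ℝ)} (hq : IsSimpleRoot id q c y) {φ : (σ → ℝ) → σ → ℝ}
    {D : (σ → ℝ) ≃L[ℝ] (σ → ℝ)} (hφ : HasStrictFDerivAt φ (D : (σ → ℝ) →L[ℝ] (σ → ℝ)) 0)
    (hφ0 : φ 0 = 0) : IsSimpleRoot φ q c fun x ↦ y (φ x) :=
  have hφ_tendsto : Tendsto φ (𝓝 0) (𝓝 0) := by simpa only [hφ0] using hφ.continuousAt.tendsto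
  ⟨hφ_tendsto.eventually hq.1, fun hO ↦ hq.2 (isBigO_of_isBigO_comp hφ hφ0 hO)⟩

lemma eventually_comp_eq_of_isSimpleRoot {f h : (Fin n → ℝ) → Fin m → ℝ}
    (hf : AnalyticAt ℝ f 0) {q : Fin m → Polynomial (MvPolynomial (Fin n) ℝ)}
    (hq : ∀ j, IsSimpleRoot id (q j) c fun x ↦ f x j) {φ : (Fin n → ℝ) → Fin n → ℝ}
    (hφ : AnalyticAt ℝ φ 0) (hφ0 : φ 0 = 0) {D : (Fin n → ℝ) ≃L[ℝ] (Fin n → ℝ)}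
    (hD : HasFDerivAt φ (D : (Fin n → ℝ) →L[ℝ] (Fin n → ℝ)) 0) (hh : AnalyticAt ℝ h 0)
    (hqh : ∀ j, ∀ᶠ x in 𝓝 0, (q j).eval₂ (MvPolynomial.eval (φ x)) (h x j) = 0)
    (hclose : (fun x ↦ h x - f (φ x)) =O[𝓝 0] fun x ↦ ‖x‖ ^ c) :
    (fun x ↦ f (φ x)) =ᶠ[𝓝 0] h := by
  have hφ' : HasStrictFDerivAt φ (D : (Fin n → ℝ) →L[ℝ] (Fin n → ℝ)) 0 :=
    hD.fderiv ▸ hφ.hasStrictFDerivAt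
  have hfφ : AnalyticAt ℝ (fun x ↦ f (φ x)) 0 := AnalyticAt.fun_comp (hφ0.symm ▸ hf) hφ
  have hcomponent (j : Fin m) : (fun x ↦ f (φ x) j) =ᶠ[𝓝 0] fun x ↦ h x j :=
    ((hq j).comp hφ' hφ0).eventually_eq (fun i ↦ (analyticAt_pi_iff.1 hφ i).contDiffAt)
      (analyticAt_pi_iff.1 hfφ j) (analyticAt_pi_iff.1 hh j) (hqh j) (isBigO_pi.1 hclose j)
  filter_upwards [eventually_all.2 hcomponent] with x hx using funext hx

end Rectification

/-- Two $C^\infty$ R equivalent Nash map germs are Nash R equivalent. -/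
theorem smooth_R_equiv_implies_Nash_R_equiv {n m : ℕ}
    {f g : (Fin n → ℝ) → (Fin m → ℝ)}
    (hf : NashGerm f) (hg : NashGerm g)
    (hsmooth : ∃ τ : (Fin n → ℝ) → (Fin n → ℝ),
      ContDiffAt ℝ (⊤ : ℕ∞) τ 0 ∧ τ 0 = 0 ∧
      (∃ Dτ : (Fin n → ℝ) ≃L[ℝ] (Fin n → ℝ),
        HasFDerivAt τ (Dτ : (Fin n → ℝ) →L[ℝ] (Fin n → ℝ)) 0) ∧
      ∀ᶠ x : Fin n → ℝ in 𝓝 0, f (τ x) = g x) :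
    ∃ τ' : (Fin n → ℝ) → (Fin n → ℝ),
      NashDiffeoGerm τ' ∧ ∀ᶠ x : Fin n → ℝ in 𝓝 0, f (τ' x) = g x := by
  obtain ⟨τ, hτ, hτ0, ⟨D, hD⟩, hfτ⟩ := hsmooth
  obtain ⟨q, hq⟩ := hf.exists_eventually_isSimpleRoot
  obtain ⟨r, hr⟩ := hg.exists_eventually_isSimpleRoot
  obtain ⟨c, hqc, hrc, hc⟩ := (hq.and (hr.and (Filter.eventually_gt_atTop 1))).exists
  obtain ⟨φ, h, hφ, hh, hφτ, hhg, hqφ, hrh⟩ := exists_nashGerm_approximation_pair (c := c)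
    hτ hτ0 hg.1.contDiffAt hg.2.1 (by lia)
  have hφD := hasFDerivAt_of_isBigO_sub hD hc hφτ
  have hφ_tendsto : Filter.Tendsto φ (𝓝 0) (𝓝 0) := by
    simpa only [hφ.2.1] using hφ.1.continuousAt.tendsto
  have hτ_tendsto : Filter.Tendsto τ (𝓝 0) (𝓝 0) := by
    simpa only [hτ0] using hτ.continuousAt.tendsto
  have hgh : g =ᶠ[𝓝 0] h := eventually_comp_eq_of_isSimpleRoot hg.1 hrc analyticAt_id rfl
    (D := .refl ℝ _) (hasFDerivAt_id 0) hh.1 (fun j ↦ hrh j _ (hrc j).1) hhg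
  have hqτ (j : Fin m) :
      ∀ᶠ x in 𝓝 0, (q j).eval₂ (MvPolynomial.eval (τ x)) (g x j) = 0 := by
    filter_upwards [hτ_tendsto.eventually (hqc j).1, hfτ] with x hx hfx using hfx ▸ hx
  have hclose : (fun x ↦ h x - f (φ x)) =O[𝓝 0] fun x ↦ ‖x‖ ^ c := by
    refine ((isBigO_comp_sub_comp hf.1.hasStrictFDerivAt hφ_tendsto hτ_tendsto).trans
      hφτ).neg_left.congr' ?_ .rfl
    filter_upwards [hfτ, hgh] with x hfx hgx using by rw [hfx, hgx, neg_sub]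
  have hfφ := eventually_comp_eq_of_isSimpleRoot hf.1 hqc hφ.1 hφ.2.1 hφD hh.1
    (fun j ↦ hqφ j _ (hqτ j)) hclose
  exact ⟨φ, ⟨hφ, D, hφD⟩, hfφ.trans hgh.symm⟩
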